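/- arXiv:2401.09278 — 5 statements merged into one kernel-verified Lean document; each statement's English description precedes it below -/
import Mathlib

section
/- There is a universal constant c > 0 and a randomized algorithm (StABL) for the adversarial multi-armed bandit problem with n arms over T rounds, using exactly two loss-value queries per round (the played arm plus one additional queried arm), such that for every contiguous interval I = [j,s] ⊆ [T] and every fixed arm i ∈ [n], the expected regret satisfies E[Σ_{t∈I} ℓ_t(x_t)] − Σ_{t∈I} ℓ_t(i) ≤ c · √(n·|I|·log n) · (log T)^{3/2}. -/
/-- One round of interaction in the two-query adversarial multi-armed bandit model is
recorded as `(x, x', ℓ x, ℓ x')`: the played arm, the additionally queried arm, and the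
two observed loss values. -/
abbrev MABRecord (n : ℕ) := Fin n × Fin n × ℝ × ℝ

/-- A (randomized) two-query bandit algorithm: given the history of past rounds
(played arm, queried arm and the two observed loss values for each past round), it
outputs a joint distribution over the pair (arm to play, arm to query), chosen before
the current loss vector is revealed. -/
def MABAlg (n : ℕ) := List (MABRecord n) → PMF (Fin n × Fin n)

/-- The distribution over length-`t` interaction histories produced by running
algorithm `act` against the oblivious loss sequence `ℓ`. -/
noncomputable def mabHist {n : ℕ} (act : MABAlg n) (ℓ : ℕ → Fin n → ℝ) :
    ℕ → PMF (List (MABRecord n))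
  | 0 => PMF.pure []
  | t + 1 => (mabHist act ℓ t).bind fun h => (act h).bind fun p =>
      PMF.pure (h ++ [(p.1, p.2, ℓ t p.1, ℓ t p.2)])

/-- Expectation of a real function under a discrete distribution. -/
noncomputable def PMF.expect {α : Type*} (μ : PMF α) (f : α → ℝ) : ℝ :=
  ∑' a, (μ a).toReal * f a

namespace PMF

variable {α β : Type*}

theorem expect_eq_sum (μ : PMF α) (f : α → ℝ) {S : Finset α} (hS : μ.support ⊆ S) :
    μ.expect f = ∑ a ∈ S, (μ a).toReal * f a := by
  refine tsum_eq_sum fun a ha => ?_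
  have h0 : μ a = 0 := by
    by_contra h
    exact ha (hS ((μ.mem_support_iff a).2 h))
  simp [h0]

theorem sum_toReal_eq_one (μ : PMF α) {S : Finset α} (hS : μ.support ⊆ S) :
    ∑ a ∈ S, (μ a).toReal = 1 := by
  have h : ∑' a, μ a = ∑ a ∈ S, μ a := by
    refine tsum_eq_sum fun a ha => ?_
    by_contra h
    exact ha (hS ((μ.mem_support_iff a).2 h))
  rw [← ENNReal.toReal_sum fun a _ => μ.apply_ne_top a, ← h, μ.tsum_coe, ENNReal.toReal_one]

@[simp]
theorem expect_pure (a : α) (f : α → ℝ) : (PMF.pure a).expect f = f a := by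
  classical
  rw [expect_eq_sum (S := {a}) _ _ (by simp)]
  simp

theorem expect_bind (μ : PMF α) (ν : α → PMF β) (hμ : μ.support.Finite)
    (hν : ∀ a, (ν a).support.Finite) (f : β → ℝ) :
    (μ.bind ν).expect f = μ.expect fun a => (ν a).expect f := by
  classical
  set S := hμ.toFinset
  have hS : μ.support ⊆ S := by simp [S]
  set R : Finset β := S.biUnion fun a => (hν a).toFinset
  have hR : ∀ a ∈ S, (ν a).support ⊆ R := by
    intro a ha b hb
    simp only [R, Finset.coe_biUnion, Set.mem_iUnion]
    exact ⟨a, ha, by simpa using hb⟩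
  have hb : (μ.bind ν).support ⊆ R := by
    intro b hb
    obtain ⟨a, ha, hab⟩ := (mem_support_bind_iff _ _ _).1 hb
    exact hR a (hS ha) hab
  have happ : ∀ b, (μ.bind ν b).toReal = ∑ a ∈ S, (μ a).toReal * (ν a b).toReal := by
    intro b
    rw [bind_apply, tsum_eq_sum (s := S), ENNReal.toReal_sum]
    · simp [ENNReal.toReal_mul]
    · exact fun a _ => ENNReal.mul_ne_top (μ.apply_ne_top a) ((ν a).apply_ne_top b)
    · intro a ha
      have h0 : μ a = 0 := by
        by_contra h
        exact ha (hS ((μ.mem_support_iff a).2 h))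
      simp [h0]
  rw [expect_eq_sum _ _ hb, expect_eq_sum _ _ hS]
  simp_rw [happ, Finset.sum_mul]
  rw [Finset.sum_comm]
  refine Finset.sum_congr rfl fun a ha => ?_
  rw [expect_eq_sum _ _ (hR a ha), Finset.mul_sum]
  exact Finset.sum_congr rfl fun b _ => by ring

theorem expect_mono (μ : PMF α) (hμ : μ.support.Finite) {f g : α → ℝ}
    (h : ∀ a ∈ μ.support, f a ≤ g a) : μ.expect f ≤ μ.expect g := by
  have hS : μ.support ⊆ hμ.toFinset := by simp
  rw [expect_eq_sum _ _ hS, expect_eq_sum _ _ hS]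
  exact Finset.sum_le_sum fun a ha =>
    mul_le_mul_of_nonneg_left (h a (by simpa using ha)) ENNReal.toReal_nonneg

theorem expect_add_const (μ : PMF α) (hμ : μ.support.Finite) (f : α → ℝ) (c : ℝ) :
    (μ.expect fun a => f a + c) = μ.expect f + c := by
  have hS : μ.support ⊆ hμ.toFinset := by simp
  rw [expect_eq_sum _ _ hS, expect_eq_sum _ _ hS]
  simp_rw [mul_add]
  rw [Finset.sum_add_distrib, ← Finset.sum_mul, sum_toReal_eq_one _ hS, one_mul]

theorem expect_const_mul (μ : PMF α) (f : α → ℝ) (c : ℝ) :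
    (μ.expect fun a => c * f a) = c * μ.expect f := by
  simp_rw [expect, ← tsum_mul_left, mul_left_comm]

theorem expect_le_of_forall_le (μ : PMF α) (hμ : μ.support.Finite) {f : α → ℝ} {c : ℝ}
    (h : ∀ a ∈ μ.support, f a ≤ c) : μ.expect f ≤ c := by
  have hS : μ.support ⊆ hμ.toFinset := by simp
  have := μ.expect_mono hμ (g := fun _ => c) h
  rwa [expect_eq_sum μ (fun _ => c) hS, ← Finset.sum_mul, sum_toReal_eq_one _ hS, one_mul] at this

theorem expect_fintype [Fintype α] (μ : PMF α) (f : α → ℝ) :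
    μ.expect f = ∑ a, (μ a).toReal * f a :=
  tsum_fintype _

theorem sum_toReal_fintype [Fintype α] (μ : PMF α) : ∑ a, (μ a).toReal = 1 :=
  μ.sum_toReal_eq_one (by simp)

theorem exists_proportional [Fintype α] [Nonempty α] (q : α → ℝ) (hq : ∀ a, 0 ≤ q a) :
    ∃ P : PMF α, ∀ a, q a = (∑ b, q b) * (P a).toReal := by
  rcases (Finset.sum_nonneg fun a _ => hq a : 0 ≤ ∑ b, q b).eq_or_lt with h | h
  · refine ⟨PMF.uniformOfFintype α, fun a => ?_⟩
    rw [← h, zero_mul]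
    exact (Finset.sum_eq_zero_iff_of_nonneg fun a _ => hq a).1 h.symm a (Finset.mem_univ a)
  · refine ⟨PMF.ofFintype (fun a => ENNReal.ofReal (q a / ∑ b, q b)) ?_, fun a => ?_⟩
    · rw [← ENNReal.ofReal_sum_of_nonneg fun a _ => div_nonneg (hq a) h.le, ← Finset.sum_div,
        div_self h.ne', ENNReal.ofReal_one]
    · rw [PMF.ofFintype_apply, ENNReal.toReal_ofReal (div_nonneg (hq a) h.le)]
      field_simp

end PMF

namespace StABL

/-- A distribution proportional to `q`, whenever one exists. -/
noncomputable def proportional {n : ℕ} [NeZero n] (q : Fin n → ℝ) : PMF (Fin n) :=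
  open Classical in
  if h : ∃ P : PMF (Fin n), ∀ a, q a = (∑ b, q b) * (P a).toReal then h.choose
  else PMF.uniformOfFintype (Fin n)

theorem proportional_spec {n : ℕ} [NeZero n] {q : Fin n → ℝ} (hq : ∀ a, 0 ≤ q a) (a : Fin n) :
    q a = (∑ b, q b) * (proportional q a).toReal := by
  have h := PMF.exists_proportional q hq
  rw [proportional, dif_pos h]
  exact h.choose_spec a

/-- The importance-weighted instantaneous regret against arm `i` when the uniformly random
query `k` returned the loss `y` (clipped to `[0,1]`) and the arm was drawn from `P`. -/
noncomputable def regretEst {n : ℕ} (P : PMF (Fin n)) (k : Fin n) (y : ℝ) (i : Fin n) : ℝ :=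
  n * max 0 (min 1 y) * ((P k).toReal - if k = i then 1 else 0)

variable {ι : Type*} [Fintype ι] {n : ℕ}

/-- The playing distribution at round `t`: proportional to the weights multiplied by the
current learning rates `g t`. -/
noncomputable def play [NeZero n] (g : ℕ → ι → ℝ) (t : ℕ) (w : ι → Fin n → ℝ) : PMF (Fin n) :=
  proportional fun i => ∑ e, g t e * w e i

/-- The expert weights after a history listed with the most recent round first. -/
noncomputable def weight [NeZero n] (g : ℕ → ι → ℝ) : List (MABRecord n) → ι → Fin n → ℝ
  | [] => fun _ _ => 1
  | r :: h => fun e i => weight g h e i *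
      (1 + g h.length e * regretEst (play g h.length (weight g h)) r.2.1 r.2.2.2 i)

/-- Play from the weights and query an independent uniformly random arm. -/
noncomputable def alg [NeZero n] (g : ℕ → ι → ℝ) : MABAlg n := fun h =>
  (play g h.length (weight g h.reverse)).bind fun x =>
    (PMF.uniformOfFintype (Fin n)).bind fun k => PMF.pure (x, k)

theorem abs_regretEst_le (P : PMF (Fin n)) (k : Fin n) (y : ℝ) (i : Fin n) :
    |regretEst P k y i| ≤ n := by
  have h0 : 0 ≤ (P k).toReal := ENNReal.toReal_nonneg
  have h1 : (P k).toReal ≤ 1 :=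
    ENNReal.toReal_le_of_le_ofReal zero_le_one (by simpa using P.coe_le_one k)
  have hy0 : 0 ≤ max 0 (min 1 y) := le_max_left _ _
  have hy1 : max 0 (min 1 y) ≤ 1 := by simp
  have hd : |(P k).toReal - if k = i then 1 else 0| ≤ 1 := by
    rw [abs_le]
    split_ifs <;> constructor <;> linarith
  rw [regretEst, abs_mul, abs_mul, abs_of_nonneg hy0, Nat.abs_cast, mul_assoc]
  exact mul_le_of_le_one_right n.cast_nonneg (mul_le_one₀ hy1 (abs_nonneg _) hd)

theorem neg_half_le_rate_mul {c : ℝ} (hc : 0 ≤ c) (hcn : c * n ≤ 1 / 2)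
    (P : PMF (Fin n)) (k : Fin n) (y : ℝ) (i : Fin n) :
    -(1 / 2) ≤ c * regretEst P k y i := by
  have := mul_le_mul_of_nonneg_left (abs_le.1 (abs_regretEst_le P k y i)).1 hc
  linarith

theorem weight_pos [NeZero n] {g : ℕ → ι → ℝ} (hg : ∀ t e, 0 ≤ g t e)
    (hgn : ∀ t e, g t e * n ≤ 1 / 2) (h : List (MABRecord n)) (e : ι) (i : Fin n) :
    0 < weight g h e i := by
  induction h with
  | nil => exact zero_lt_one
  | cons r h ih =>
    refine mul_pos ih ?_
    linarith [neg_half_le_rate_mul (hg h.length e) (hgn h.length e)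
      (play g h.length (weight g h)) r.2.1 r.2.2.2 i]

theorem sum_regretEst (P : PMF (Fin n)) (k : Fin n) (y : ℝ) :
    ∑ i, (P i).toReal * regretEst P k y i = 0 := by
  have h : ∀ i, (P i).toReal * regretEst P k y i =
      n * max 0 (min 1 y) * ((P k).toReal * (P i).toReal - if k = i then (P i).toReal else 0) := by
    intro i
    rw [regretEst]
    split_ifs <;> ring
  simp_rw [h]
  rw [← Finset.mul_sum, Finset.sum_sub_distrib, ← Finset.mul_sum, P.sum_toReal_fintype]
  simp

theorem sum_weight [NeZero n] {g : ℕ → ι → ℝ} (hg : ∀ t e, 0 ≤ g t e)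
    (hgn : ∀ t e, g t e * n ≤ 1 / 2) (h : List (MABRecord n)) :
    ∑ e, ∑ i, weight g h e i = Fintype.card ι * n := by
  induction h with
  | nil => simp [weight]
  | cons r h ih =>
    set P := play g h.length (weight g h) with hP
    set q : Fin n → ℝ := fun i => ∑ e, g h.length e * weight g h e i with hq
    have hspec : ∀ i, q i = (∑ b, q b) * (P i).toReal := proportional_spec fun i =>
      Finset.sum_nonneg fun e _ => mul_nonneg (hg _ _) (weight_pos hg hgn h e i).le
    have hzero : ∑ e, ∑ i, weight g h e i * (g h.length e * regretEst P r.2.1 r.2.2.2 i) = 0 := by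
      rw [Finset.sum_comm]
      calc _ = ∑ i, q i * regretEst P r.2.1 r.2.2.2 i := by
            refine Finset.sum_congr rfl fun i _ => ?_
            rw [hq, Finset.sum_mul]
            exact Finset.sum_congr rfl fun e _ => by ring
        _ = (∑ b, q b) * ∑ i, (P i).toReal * regretEst P r.2.1 r.2.2.2 i := by
            rw [Finset.mul_sum]
            refine Finset.sum_congr rfl fun i _ => ?_
            rw [hspec i, mul_assoc]
        _ = 0 := by rw [sum_regretEst, mul_zero]
    simp only [weight, mul_add, mul_one, Finset.sum_add_distrib]
    rw [ih, ← hP, hzero, add_zero]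

theorem log_weight_le [NeZero n] {g : ℕ → ι → ℝ} (hg : ∀ t e, 0 ≤ g t e)
    (hgn : ∀ t e, g t e * n ≤ 1 / 2) (h : List (MABRecord n)) (e : ι) (i : Fin n) :
    Real.log (weight g h e i) ≤ Real.log (Fintype.card ι * n) := by
  refine Real.log_le_log (weight_pos hg hgn h e i) ?_
  rw [← sum_weight hg hgn h]
  have hp := fun e i => (weight_pos hg hgn h e i).le
  calc weight g h e i ≤ ∑ i, weight g h e i :=
        Finset.single_le_sum (f := fun i => weight g h e i) (fun i _ => hp e i) (Finset.mem_univ i)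
    _ ≤ _ := Finset.single_le_sum (f := fun e => ∑ i, weight g h e i)
        (fun e _ => Finset.sum_nonneg fun i _ => hp e i) (Finset.mem_univ e)

theorem sub_two_mul_sq_le_log {x : ℝ} (hx : -(1 / 2) ≤ x) :
    x - 2 * x ^ 2 ≤ Real.log (1 + x) := by
  have hpos : 0 < 1 + x := by linarith
  refine le_trans ?_ (Real.one_sub_inv_le_log_of_pos hpos)
  have h : 1 - (1 + x)⁻¹ - (x - 2 * x ^ 2) = x ^ 2 * (1 + 2 * x) / (1 + x) := by
    field_simp
    ring
  have : 0 ≤ x ^ 2 * (1 + 2 * x) / (1 + x) :=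
    div_nonneg (mul_nonneg (sq_nonneg x) (by linarith)) hpos.le
  linarith

theorem mean_regretEst [NeZero n] (P : PMF (Fin n)) {ℓ : Fin n → ℝ}
    (hℓ : ∀ i, ℓ i ∈ Set.Icc (0 : ℝ) 1) (i : Fin n) :
    ∑ k, (n : ℝ)⁻¹ * regretEst P k (ℓ k) i = (∑ k, (P k).toReal * ℓ k) - ℓ i := by
  have hn : (n : ℝ) ≠ 0 := NeZero.ne _
  have h : ∀ k, (n : ℝ)⁻¹ * regretEst P k (ℓ k) i =
      (P k).toReal * ℓ k - if k = i then ℓ k else 0 := by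
    intro k
    rw [regretEst, min_eq_right (hℓ k).2, max_eq_right (hℓ k).1]
    split_ifs <;> field_simp <;> ring
  simp_rw [h]
  rw [Finset.sum_sub_distrib]
  simp

theorem mean_sq_regretEst_le [NeZero n] (P : PMF (Fin n)) {ℓ : Fin n → ℝ}
    (hℓ : ∀ i, ℓ i ∈ Set.Icc (0 : ℝ) 1) (i : Fin n) :
    ∑ k, (n : ℝ)⁻¹ * regretEst P k (ℓ k) i ^ 2 ≤ 2 * n := by
  have hn : (n : ℝ) ≠ 0 := NeZero.ne _
  have h : ∀ k, (n : ℝ)⁻¹ * regretEst P k (ℓ k) i ^ 2 ≤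
      n * ((P k).toReal + if k = i then 1 else 0) := by
    intro k
    obtain ⟨h0, h1⟩ := hℓ k
    have hP0 : 0 ≤ (P k).toReal := ENNReal.toReal_nonneg
    have hP1 : (P k).toReal ≤ 1 :=
      ENNReal.toReal_le_of_le_ofReal zero_le_one (by simpa using P.coe_le_one k)
    rw [regretEst, min_eq_right h1, max_eq_right h0]
    have heq : (n : ℝ)⁻¹ * (n * ℓ k * ((P k).toReal - if k = i then 1 else 0)) ^ 2 =
        n * (ℓ k ^ 2 * ((P k).toReal - if k = i then 1 else 0) ^ 2) := by
      field_simp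
    rw [heq]
    refine mul_le_mul_of_nonneg_left ?_ n.cast_nonneg
    refine (mul_le_of_le_one_left (sq_nonneg _) (pow_le_one₀ h0 h1)).trans ?_
    split_ifs <;> nlinarith
  refine (Finset.sum_le_sum fun k _ => h k).trans_eq ?_
  rw [← Finset.mul_sum, Finset.sum_add_distrib, P.sum_toReal_fintype]
  simp
  ring

theorem mean_log_ge [NeZero n] (P : PMF (Fin n)) {ℓ : Fin n → ℝ}
    (hℓ : ∀ i, ℓ i ∈ Set.Icc (0 : ℝ) 1) (i : Fin n) {c : ℝ} (hc : 0 ≤ c) (hcn : c * n ≤ 1 / 2) :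
    c * ((∑ k, (P k).toReal * ℓ k) - ℓ i) - 4 * n * c ^ 2 ≤
      ∑ k, (n : ℝ)⁻¹ * Real.log (1 + c * regretEst P k (ℓ k) i) := by
  have h := Finset.sum_le_sum fun k (_ : k ∈ Finset.univ) =>
    mul_le_mul_of_nonneg_left (sub_two_mul_sq_le_log
      (neg_half_le_rate_mul hc hcn P k (ℓ k) i)) (inv_nonneg.2 (Nat.cast_nonneg (α := ℝ) n))
  refine le_trans ?_ h
  have heq : ∑ k, (n : ℝ)⁻¹ * (c * regretEst P k (ℓ k) i - 2 * (c * regretEst P k (ℓ k) i) ^ 2) =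
      c * (∑ k, (n : ℝ)⁻¹ * regretEst P k (ℓ k) i) -
        2 * c ^ 2 * ∑ k, (n : ℝ)⁻¹ * regretEst P k (ℓ k) i ^ 2 := by
    rw [Finset.mul_sum, Finset.mul_sum, ← Finset.sum_sub_distrib]
    exact Finset.sum_congr rfl fun k _ => by ring
  rw [heq, mean_regretEst P hℓ]
  nlinarith [mul_le_mul_of_nonneg_left (mean_sq_regretEst_le P hℓ i) (sq_nonneg c)]

theorem finite_support_mabHist (act : MABAlg n) (ℓ : ℕ → Fin n → ℝ) (t : ℕ) :
    (mabHist act ℓ t).support.Finite := by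
  induction t with
  | zero => simp [mabHist]
  | succ t ih =>
    rw [mabHist, PMF.support_bind]
    refine ih.biUnion fun h _ => ?_
    rw [PMF.support_bind]
    exact (Set.toFinite _).biUnion fun p _ => by simp

theorem mem_support_mabHist {act : MABAlg n} {ℓ : ℕ → Fin n → ℝ}
    (hℓ : ∀ t i, ℓ t i ∈ Set.Icc (0 : ℝ) 1) (t : ℕ) :
    ∀ h ∈ (mabHist act ℓ t).support, h.length = t ∧ ∀ r ∈ h, r.2.2.1 ≤ 1 := by
  induction t with
  | zero => simp [mabHist]
  | succ t ih =>
    intro h hh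
    simp only [mabHist, PMF.mem_support_bind_iff, PMF.support_pure, Set.mem_singleton_iff] at hh
    obtain ⟨h', hh', p, _, rfl⟩ := hh
    obtain ⟨hlen, hle⟩ := ih h' hh'
    refine ⟨by simp [hlen], fun r hr => ?_⟩
    rcases List.mem_append.1 hr with hr | hr
    · exact hle r hr
    · rw [List.mem_singleton.1 hr]
      exact (hℓ t p.1).2

theorem expect_mabHist_succ (act : MABAlg n) (ℓ : ℕ → Fin n → ℝ) (t : ℕ)
    (f : List (MABRecord n) → ℝ) :
    (mabHist act ℓ (t + 1)).expect f = (mabHist act ℓ t).expect fun h =>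
      (act h).expect fun p => f (h ++ [(p.1, p.2, ℓ t p.1, ℓ t p.2)]) := by
  rw [mabHist, PMF.expect_bind _ _ (finite_support_mabHist act ℓ t)]
  · congr 1
    ext h
    rw [PMF.expect_bind _ _ (Set.toFinite _) fun p => by simp]
    simp
  · intro h
    rw [PMF.support_bind]
    exact (Set.toFinite _).biUnion fun p _ => by simp

theorem expect_alg [NeZero n] (g : ℕ → ι → ℝ) (h : List (MABRecord n)) (f : Fin n × Fin n → ℝ) :
    (alg g h).expect f = ∑ x, (play g h.length (weight g h.reverse) x).toReal *
      ∑ k, (n : ℝ)⁻¹ * f (x, k) := by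
  rw [alg, PMF.expect_bind _ _ (Set.toFinite _) fun _ => Set.toFinite _, PMF.expect_fintype]
  refine Finset.sum_congr rfl fun x _ => ?_
  rw [PMF.expect_bind _ _ (Set.toFinite _) fun _ => Set.toFinite _, PMF.expect_fintype]
  simp

/-- The cumulative suffered loss, with round `τ` scaled by `g τ`. -/
noncomputable def scaledLoss (g : ℕ → ℝ) (t : ℕ) (h : List (MABRecord n)) : ℝ :=
  ∑ τ ∈ Finset.range t, g τ * (h.map fun rec => rec.2.2.1).getD τ 0

theorem scaledLoss_append (g : ℕ → ℝ) (h : List (MABRecord n)) (r : MABRecord n) :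
    scaledLoss g (h.length + 1) (h ++ [r]) = scaledLoss g h.length h + g h.length * r.2.2.1 := by
  rw [scaledLoss, scaledLoss, Finset.sum_range_succ]
  congr 1
  · refine Finset.sum_congr rfl fun τ hτ => ?_
    rw [List.map_append, List.getD_append _ _ _ _ (by simpa using hτ)]
  · simp

theorem expect_step_le [NeZero n] {g : ℕ → ι → ℝ} (hg : ∀ t e, 0 ≤ g t e)
    (hgn : ∀ t e, g t e * n ≤ 1 / 2) {ℓ : ℕ → Fin n → ℝ}
    (hℓ : ∀ t i, ℓ t i ∈ Set.Icc (0 : ℝ) 1) (e : ι) (i : Fin n) (h : List (MABRecord n)) :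
    ((alg g h).expect fun p =>
      scaledLoss (g · e) (h.length + 1) (h ++ [(p.1, p.2, ℓ h.length p.1, ℓ h.length p.2)]) -
        Real.log (weight g (h ++ [(p.1, p.2, ℓ h.length p.1, ℓ h.length p.2)]).reverse e i)) ≤
      scaledLoss (g · e) h.length h - Real.log (weight g h.reverse e i) +
        (g h.length e * ℓ h.length i + 4 * n * g h.length e ^ 2) := by
  have hn : (n : ℝ) ≠ 0 := NeZero.ne _
  set t := h.length with ht
  set P := play g t (weight g h.reverse) with hP
  set A := scaledLoss (g · e) t h - Real.log (weight g h.reverse e i) with hA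
  have hlog : ∀ p : Fin n × Fin n,
      scaledLoss (g · e) (t + 1) (h ++ [(p.1, p.2, ℓ t p.1, ℓ t p.2)]) -
        Real.log (weight g (h ++ [(p.1, p.2, ℓ t p.1, ℓ t p.2)]).reverse e i) =
      A + g t e * ℓ t p.1 - Real.log (1 + g t e * regretEst P p.2 (ℓ t p.2) i) := by
    intro p
    have hpos : 0 < 1 + g t e * regretEst P p.2 (ℓ t p.2) i := by
      linarith [neg_half_le_rate_mul (hg t e) (hgn t e) P p.2 (ℓ t p.2) i]
    rw [ht, scaledLoss_append, List.reverse_append, List.reverse_singleton, List.singleton_append,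
      weight, List.length_reverse, ← ht, ← hP,
      Real.log_mul (weight_pos hg hgn _ e i).ne' hpos.ne', hA]
    ring
  simp_rw [hlog]
  rw [expect_alg]
  have hin : ∀ x, ∑ k, (n : ℝ)⁻¹ * (A + g t e * ℓ t x -
      Real.log (1 + g t e * regretEst P k (ℓ t k) i)) = A + g t e * ℓ t x -
      ∑ k, (n : ℝ)⁻¹ * Real.log (1 + g t e * regretEst P k (ℓ t k) i) := by
    intro x
    simp_rw [mul_sub]
    rw [Finset.sum_sub_distrib]
    congr 1
    simp only [Finset.sum_const, Finset.card_univ, Fintype.card_fin, nsmul_eq_mul]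
    field_simp
  simp only [← ht, ← hP]
  simp_rw [hin]
  set B := ∑ k, (n : ℝ)⁻¹ * Real.log (1 + g t e * regretEst P k (ℓ t k) i) with hB
  have hout : ∑ x, (P x).toReal * (A + g t e * ℓ t x - B) =
      A - B + g t e * ∑ x, (P x).toReal * ℓ t x := by
    calc _ = ∑ x, ((P x).toReal * (A - B) + g t e * ((P x).toReal * ℓ t x)) :=
          Finset.sum_congr rfl fun x _ => by ring
      _ = _ := by
          rw [Finset.sum_add_distrib, ← Finset.sum_mul, P.sum_toReal_fintype, one_mul,
            Finset.mul_sum]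
  rw [hout]
  linarith [mean_log_ge P (hℓ t) i (hg t e) (hgn t e)]

theorem expect_potential_le [NeZero n] {g : ℕ → ι → ℝ} (hg : ∀ t e, 0 ≤ g t e)
    (hgn : ∀ t e, g t e * n ≤ 1 / 2) {ℓ : ℕ → Fin n → ℝ}
    (hℓ : ∀ t i, ℓ t i ∈ Set.Icc (0 : ℝ) 1) (e : ι) (i : Fin n) (t : ℕ) :
    ((mabHist (alg g) ℓ t).expect fun h =>
      scaledLoss (g · e) t h - Real.log (weight g h.reverse e i)) ≤
      ∑ τ ∈ Finset.range t, (g τ e * ℓ τ i + 4 * n * g τ e ^ 2) := by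
  induction t with
  | zero => simp [mabHist, scaledLoss, weight]
  | succ t ih =>
    have hfin := finite_support_mabHist (alg g) ℓ t
    rw [expect_mabHist_succ, Finset.sum_range_succ]
    refine le_trans (PMF.expect_mono _ hfin fun h hh => ?_)
      ((PMF.expect_add_const _ hfin _ _).trans_le (add_le_add_left ih _))
    obtain rfl := (mem_support_mabHist hℓ t h hh).1
    exact expect_step_le hg hgn hℓ e i h

/-- Regret of the algorithm against arm `i`, with round `τ` scaled by the learning rate of `e`. -/
theorem expect_scaledLoss_le [NeZero n] {g : ℕ → ι → ℝ} (hg : ∀ t e, 0 ≤ g t e)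
    (hgn : ∀ t e, g t e * n ≤ 1 / 2) {ℓ : ℕ → Fin n → ℝ}
    (hℓ : ∀ t i, ℓ t i ∈ Set.Icc (0 : ℝ) 1) (e : ι) (i : Fin n) (t : ℕ) :
    (mabHist (alg g) ℓ t).expect (scaledLoss (g · e) t) ≤
      ∑ τ ∈ Finset.range t, (g τ e * ℓ τ i + 4 * n * g τ e ^ 2) +
        Real.log (Fintype.card ι * n) := by
  have hfin := finite_support_mabHist (alg g) ℓ t
  have h := PMF.expect_add_const _ hfin (fun h => scaledLoss (g · e) t h -
    Real.log (weight g h.reverse e i)) (Real.log (Fintype.card ι * n))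
  have h' := PMF.expect_mono _ hfin (f := scaledLoss (g · e) t)
    (g := fun h => scaledLoss (g · e) t h - Real.log (weight g h.reverse e i) +
      Real.log (Fintype.card ι * n)) fun h _ => by
        linarith [log_weight_le hg hgn h.reverse e i]
  linarith [expect_potential_le hg hgn hℓ e i t]

theorem expect_sum_loss_le (act : MABAlg n) {ℓ : ℕ → Fin n → ℝ}
    (hℓ : ∀ t i, ℓ t i ∈ Set.Icc (0 : ℝ) 1) (t : ℕ) (S : Finset ℕ) :
    ((mabHist act ℓ t).expect fun h =>
      ∑ τ ∈ S, (h.map fun rec => rec.2.2.1).getD τ 0) ≤ S.card := by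
  refine PMF.expect_le_of_forall_le _ (finite_support_mabHist act ℓ t) fun h hh => ?_
  refine (Finset.sum_le_sum fun τ _ => ?_ : _ ≤ ∑ _τ ∈ S, (1 : ℝ)).trans_eq (by simp)
  have hle := (mem_support_mabHist hℓ t h hh).2
  rcases lt_or_ge τ (h.map fun rec => rec.2.2.1).length with hτ | hτ
  · rw [List.getD_eq_getElem _ _ hτ, List.getElem_map]
    exact hle _ (List.getElem_mem _)
  · rw [List.getD_eq_default _ _ hτ]
    exact zero_le_one

/-- The tuned learning rate for intervals of length `m`, where `L` is the logarithm of the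
number of experts. -/
noncomputable def rate (n : ℕ) (L m : ℝ) : ℝ :=
  min (Real.sqrt (L / (n * m))) (1 / (2 * n))

/-- The learning rates of experts indexed by intervals `[a, b]`, zero outside the interval. -/
noncomputable def intervalRate (n T : ℕ) (L : ℝ) (t : ℕ) (e : Fin T × Fin T) : ℝ :=
  if t ∈ Finset.Icc (e.1 : ℕ) e.2 then rate n L ((e.2 : ℝ) - e.1 + 1) else 0

theorem interval_regret_le [NeZero n] {T : ℕ} {L : ℝ} (hL : L = Real.log ((T * T : ℕ) * n))
    (hLpos : 0 < L) {ℓ : ℕ → Fin n → ℝ} (hℓ : ∀ t i, ℓ t i ∈ Set.Icc (0 : ℝ) 1) {j s : ℕ}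
    (hjs : j ≤ s) (hsT : s < T) (i : Fin n) :
    ((mabHist (alg (intervalRate n T L)) ℓ T).expect fun h =>
        ∑ t ∈ Finset.Icc j s, (h.map fun rec => rec.2.2.1).getD t 0) -
      ∑ t ∈ Finset.Icc j s, ℓ t i ≤ 5 * Real.sqrt (n * ((s : ℝ) - j + 1) * L) := by
  have hn : (0 : ℝ) < n := Nat.cast_pos.2 (NeZero.pos n)
  set m : ℝ := (s : ℝ) - j + 1 with hm
  have hmcard : ((Finset.Icc j s).card : ℝ) = m := by
    rw [Nat.card_Icc, Nat.cast_sub (by omega), hm]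
    push_cast
    ring
  have hmpos : 0 < m := by
    have : (j : ℝ) ≤ s := by exact_mod_cast hjs
    linarith
  set R := Real.sqrt (n * m * L) with hR
  have hR0 : 0 ≤ R := Real.sqrt_nonneg _
  have hRsq : R * R = n * m * L := Real.mul_self_sqrt (by positivity)
  have hg : ∀ t e, 0 ≤ intervalRate n T L t e := by
    intro t e
    rw [intervalRate]
    split_ifs
    · exact le_min (Real.sqrt_nonneg _) (by positivity)
    · exact le_rfl
  have hgn : ∀ t e, intervalRate n T L t e * n ≤ 1 / 2 := by
    intro t e
    rw [intervalRate]
    split_ifs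
    · refine (mul_le_mul_of_nonneg_right (min_le_right _ _) hn.le).trans_eq ?_
      field_simp
    · norm_num
  rcases le_total (Real.sqrt (L / (n * m))) (1 / (2 * n)) with hη | hη
  · set η := Real.sqrt (L / (n * m)) with hηdef
    have hηpos : 0 < η := Real.sqrt_pos.2 (by positivity)
    have hηR : η * R = L := by
      rw [hηdef, hR, ← Real.sqrt_mul (by positivity)]
      rw [show L / (n * m) * (n * m * L) = L ^ 2 by field_simp, Real.sqrt_sq hLpos.le]
    have hηR' : n * m * η = R := by
      refine mul_left_cancel₀ hηpos.ne' ?_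
      rw [hηR, show η * (n * m * η) = n * m * (η * η) by ring, hηdef,
        Real.mul_self_sqrt (by positivity)]
      field_simp
    let e : Fin T × Fin T := (⟨j, by omega⟩, ⟨s, hsT⟩)
    have hrate : ∀ t, intervalRate n T L t e = if t ∈ Finset.Icc j s then η else 0 := by
      intro t
      simp only [intervalRate, rate, e, ← hm, ← hηdef, min_eq_left hη]
    have hsub : Finset.Icc j s ⊆ Finset.range T := fun t ht =>
      Finset.mem_range.2 ((Finset.mem_Icc.1 ht).2.trans_lt hsT)
    have hmain := expect_scaledLoss_le hg hgn hℓ e i T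
    have hloss : scaledLoss (n := n) (intervalRate n T L · e) T = fun h =>
        η * ∑ t ∈ Finset.Icc j s, (h.map fun rec => rec.2.2.1).getD t 0 := by
      ext h
      rw [scaledLoss, Finset.mul_sum, ← Finset.sum_subset hsub fun t _ ht => by simp [hrate t, ht]]
      exact Finset.sum_congr rfl fun t ht => by rw [hrate, if_pos ht]
    have hcomp : ∑ τ ∈ Finset.range T, (intervalRate n T L τ e * ℓ τ i +
        4 * n * intervalRate n T L τ e ^ 2) =
        η * ∑ t ∈ Finset.Icc j s, ℓ t i + 4 * n * η ^ 2 * m := by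
      rw [← Finset.sum_subset hsub fun t _ ht => by simp [hrate t, ht], ← hmcard,
        Finset.mul_sum, mul_comm _ ((Finset.Icc j s).card : ℝ), ← nsmul_eq_mul,
        ← Finset.sum_const, ← Finset.sum_add_distrib]
      exact Finset.sum_congr rfl fun t ht => by rw [hrate, if_pos ht]
    have hcard : Real.log (Fintype.card (Fin T × Fin T) * n) = L := by
      rw [hL, Fintype.card_prod, Fintype.card_fin]
    rw [hloss, hcomp, hcard, PMF.expect_const_mul] at hmain
    refine le_of_mul_le_mul_left ?_ hηpos
    have h4 : 4 * n * η ^ 2 * m = η * (4 * R) := by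
      rw [← hηR']
      ring
    rw [mul_sub]
    linarith
  · have htriv := expect_sum_loss_le (alg (intervalRate n T L)) hℓ T (Finset.Icc j s)
    have hnonneg : 0 ≤ ∑ t ∈ Finset.Icc j s, ℓ t i := Finset.sum_nonneg fun t _ => (hℓ t i).1
    have hml : m ≤ 4 * n * L := by
      have h := (Real.le_sqrt (by positivity) (by positivity)).1 hη
      rw [div_pow, one_pow, div_le_div_iff₀ (by positivity) (by positivity)] at h
      refine le_of_mul_le_mul_left ?_ hn
      linarith
    have hmR : m ≤ 5 * R := by
      refine abs_le_of_sq_le_sq' ?_ (by positivity) |>.2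
      nlinarith [mul_le_mul_of_nonneg_left hml hmpos.le, mul_nonneg hR0 hR0]
    rw [hmcard] at htriv
    linarith

theorem sqrt_log_card_le {n T : ℕ} (hn : 2 ≤ n) (hT : 2 ≤ T) {m : ℝ} (hm : 0 ≤ m) :
    Real.sqrt (n * m * Real.log ((T * T : ℕ) * n)) ≤
      6 * (Real.sqrt (n * m * Real.log n) * Real.log T ^ ((3 : ℝ) / 2)) := by
  have hn' : (2 : ℝ) ≤ n := by exact_mod_cast hn
  have hT' : (2 : ℝ) ≤ T := by exact_mod_cast hT
  have hlog2 := Real.log_two_gt_d9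
  have ha : 1 / 2 ≤ Real.log n := by
    linarith [Real.log_le_log two_pos hn']
  have hb : 1 / 2 ≤ Real.log T := by
    linarith [Real.log_le_log two_pos hT']
  have hL : Real.log ((T * T : ℕ) * n) = 2 * Real.log T + Real.log n := by
    push_cast
    rw [Real.log_mul (by positivity) (by positivity), Real.log_mul (by positivity) (by positivity)]
    ring
  have hpow : Real.log T ^ ((3 : ℝ) / 2) = Real.sqrt (Real.log T ^ 3) := by
    rw [Real.sqrt_eq_rpow, ← Real.rpow_natCast, ← Real.rpow_mul (by linarith)]
    norm_num
  rw [hL, hpow, ← Real.sqrt_mul (by positivity)]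
  set a := Real.log n
  set b := Real.log T
  have hab : 2 * b + a ≤ 36 * (a * b ^ 3) := by
    have h1 : b ≤ 4 * b ^ 3 := by
      nlinarith [mul_nonneg (by linarith : 0 ≤ b) (by nlinarith : 0 ≤ 4 * b ^ 2 - 1)]
    have h2 : 1 / 8 ≤ b ^ 3 := by nlinarith
    have h3 : 0 ≤ (a - 1 / 2) * (b ^ 3 - 1 / 8) := mul_nonneg (by linarith) (by linarith)
    nlinarith
  rw [show (6 : ℝ) = Real.sqrt 36 by
    rw [show (36 : ℝ) = 6 ^ 2 by norm_num, Real.sqrt_sq (by norm_num)],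
    ← Real.sqrt_mul (by norm_num)]
  refine Real.sqrt_le_sqrt ?_
  have := mul_le_mul_of_nonneg_left hab (by positivity : (0 : ℝ) ≤ n * m)
  linarith

end StABL

/-- Strongly adaptive regret with two queries (StABL).
There is a universal constant `c > 0` such that for every `n ≥ 2` arms and horizon
`T ≥ 2` there is a randomized two-query bandit algorithm such that, for every oblivious
loss sequence with values in `[0,1]`, every contiguous interval `[j,s] ⊆ [T]` (rounds
indexed `0, …, T−1`) and every fixed arm `i`, the expected total loss suffered on the
interval exceeds that of arm `i` by at most `c √(n |I| log n) (log T)^{3/2}`, where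
`|I| = s − j + 1`.  The suffered loss at round `t` is the third component of the `t`-th
history record, i.e. `ℓ t x_t`. -/
theorem stabl_two_query_adaptive_regret :
    ∃ c : ℝ, 0 < c ∧
      ∀ n T : ℕ, 2 ≤ n → 2 ≤ T →
        ∃ act : MABAlg n,
          ∀ ℓ : ℕ → Fin n → ℝ, (∀ t i, ℓ t i ∈ Set.Icc (0 : ℝ) 1) →
          ∀ j s : ℕ, j ≤ s → s < T → ∀ i : Fin n,
            (∑' h : List (MABRecord n), (mabHist act ℓ T h).toReal *
                ∑ t ∈ Finset.Icc j s, ((h.map fun rec => rec.2.2.1).getD t 0))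
              - ∑ t ∈ Finset.Icc j s, ℓ t i
            ≤ c * Real.sqrt (n * ((s : ℝ) - j + 1) * Real.log n) *
                Real.log T ^ ((3 : ℝ) / 2) := by
  refine ⟨30, by norm_num, fun n T hn hT => ?_⟩
  have : NeZero n := ⟨by omega⟩
  set L := Real.log ((T * T : ℕ) * n) with hL
  have hLpos : 0 < L := by
    refine Real.log_pos ?_
    have : 1 < T * T * n := by nlinarith
    exact_mod_cast this
  refine ⟨StABL.alg (StABL.intervalRate n T L), fun ℓ hℓ j s hjs hsT i => ?_⟩
  have hm : (0 : ℝ) ≤ (s : ℝ) - j + 1 := by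
    have : (j : ℝ) ≤ s := by exact_mod_cast hjs
    linarith
  have hreg := StABL.interval_regret_le hL hLpos hℓ hjs hsT i
  have hbound := StABL.sqrt_log_card_le hn hT hm
  rw [← hL] at hbound
  refine hreg.trans ?_
  linarith
end

section
/- Consider the exponential-weights (EXP3-type) algorithm over n arms with losses ℓ_1,…,ℓ_T ∈ [0,1]^n: weights start at w_1 = (1/n,…,1/n) and are updated by w_{t+1}(i) ∝ w_t(i)·exp(−η·ℓ̃_t(i)), where at each round t (given the history) a probability distribution z_t over [n] satisfying w_t(i) ≤ C·z_t(i) for all i is chosen, an index i_t ∼ z_t is sampled independently, and ℓ̃_t(i) = 1{i = i_t}·ℓ_t(i)/z_t(i). Then with step size η = √(log n / (T·n·C)), for every fixed arm i*: E[Σ_{t=1}^T ⟨ℓ_t, w_t⟩] − Σ_{t=1}^T ℓ_t(i*) ≤ 2·√(C·n·T·log n). -/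
/-- Exponential weights driven by importance-weighted loss estimators.
The history `h` lists the sampled indices, most recent first; `expWeights n ℓ η z h`
is the weight vector after processing the rounds recorded in `h`, starting from the
uniform weights `1/n` and updating by `w' i ∝ w i * exp (−η * ℓ̃ i)` where
`ℓ̃ i = 1{i = sampled} * ℓ t i / z h i`. -/
noncomputable def expWeights (n : ℕ) (ℓ : ℕ → Fin n → ℝ) (η : ℝ)
    (z : List (Fin n) → Fin n → ℝ) : List (Fin n) → Fin n → ℝ
  | [] => fun _ => 1 / n
  | i :: h => fun j =>
      expWeights n ℓ η z h j *
          Real.exp (-η * (if j = i then ℓ h.length j / z h j else 0)) /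
        ∑ a, expWeights n ℓ η z h a *
          Real.exp (-η * (if a = i then ℓ h.length a / z h a else 0))

/-- The distribution of the sampling history (most recent index first) after `t` rounds,
when at each round an index is drawn from `zP` applied to the current history. -/
noncomputable def sampleHist (n : ℕ) (zP : List (Fin n) → PMF (Fin n)) :
    ℕ → PMF (List (Fin n))
  | 0 => PMF.pure []
  | t + 1 => (sampleHist n zP t).bind fun h => (zP h).bind fun i => PMF.pure (i :: h)

section History

variable {n : ℕ} (zP : List (Fin n) → PMF (Fin n))

theorem sampleHist_succ_nil (t : ℕ) : sampleHist n zP (t + 1) [] = 0 := by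
  simp [sampleHist, PMF.bind_apply, PMF.pure_apply]

theorem sampleHist_succ_cons (t : ℕ) (i : Fin n) (h : List (Fin n)) :
    sampleHist n zP (t + 1) (i :: h) = sampleHist n zP t h * zP h i := by
  simp only [sampleHist, PMF.bind_apply, PMF.pure_apply, List.cons.injEq]
  rw [tsum_eq_single h]
  · congr 1
    rw [tsum_eq_single i]
    · simp
    · intro j hj
      simp [hj.symm]
  · intro g hg
    simp [hg.symm]

theorem sampleHist_eq_zero_of_length_ne (t : ℕ) (h : List (Fin n)) (hh : h.length ≠ t) :
    sampleHist n zP t h = 0 := by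
  induction t generalizing h with
  | zero =>
    have : h ≠ [] := by rintro rfl; simp at hh
    simp [sampleHist, PMF.pure_apply, this]
  | succ t ih =>
    cases h with
    | nil => exact sampleHist_succ_nil zP t
    | cons i h =>
      rw [sampleHist_succ_cons, ih h (by simpa using hh), zero_mul]

theorem summable_sampleHist_mul (t : ℕ) (f : List (Fin n) → ℝ) :
    Summable fun h => (sampleHist n zP t h).toReal * f h := by
  refine summable_of_hasFiniteSupport ((List.finite_length_eq (Fin n) t).subset ?_)
  intro h hh
  by_contra hne
  exact hh (by simp [sampleHist_eq_zero_of_length_ne zP t h hne])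

/-- The expectation of `f` over the sampling history after `t` rounds. -/
noncomputable def histExp (t : ℕ) (f : List (Fin n) → ℝ) : ℝ :=
  ∑' h, (sampleHist n zP t h).toReal * f h

theorem histExp_zero (f : List (Fin n) → ℝ) : histExp zP 0 f = f [] := by
  unfold histExp
  rw [tsum_eq_single []]
  · simp [sampleHist]
  · intro h hh
    simp [sampleHist, PMF.pure_apply, hh]

/-- The tower property. -/
theorem histExp_succ (t : ℕ) (f : List (Fin n) → ℝ) :
    histExp zP (t + 1) f = histExp zP t fun h => ∑ i, (zP h i).toReal * f (i :: h) := by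
  unfold histExp
  have hinj : Function.Injective fun p : List (Fin n) × Fin n => p.2 :: p.1 := by
    rintro ⟨h, i⟩ ⟨g, j⟩ hp
    simp_all
  have hsupp : (Function.support fun h => (sampleHist n zP (t + 1) h).toReal * f h) ⊆
      Set.range fun p : List (Fin n) × Fin n => p.2 :: p.1 := by
    intro h hh
    cases h with
    | nil => exact absurd (by simp [sampleHist_succ_nil]) hh
    | cons i h => exact ⟨(h, i), rfl⟩
  rw [← hinj.tsum_eq hsupp]
  refine (((summable_sampleHist_mul zP (t + 1) f).comp_injective hinj).tsum_prod).trans ?_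
  refine tsum_congr fun h => ?_
  rw [tsum_fintype, Finset.mul_sum]
  refine Finset.sum_congr rfl fun i _ => ?_
  simp only [Function.comp, sampleHist_succ_cons, ENNReal.toReal_mul, mul_assoc]

theorem histExp_mono (t : ℕ) {f g : List (Fin n) → ℝ}
    (hfg : ∀ h : List (Fin n), h.length = t → f h ≤ g h) : histExp zP t f ≤ histExp zP t g := by
  refine (summable_sampleHist_mul zP t f).tsum_le_tsum (fun h => ?_)
    (summable_sampleHist_mul zP t g)
  by_cases hh : h.length = t
  · exact mul_le_mul_of_nonneg_left (hfg h hh) ENNReal.toReal_nonneg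
  · simp [sampleHist_eq_zero_of_length_ne zP t h hh]

theorem PMF.tsum_toReal {α : Type*} (p : PMF α) : ∑' a, (p a).toReal = 1 := by
  rw [← ENNReal.tsum_toReal_eq fun a => p.apply_ne_top a, p.tsum_coe, ENNReal.toReal_one]

theorem histExp_add_const (t : ℕ) (f : List (Fin n) → ℝ) (c : ℝ) :
    histExp zP t (fun h => f h + c) = histExp zP t f + c := by
  simp only [histExp, mul_add]
  rw [(summable_sampleHist_mul zP t f).tsum_add (summable_sampleHist_mul zP t fun _ => c),
    tsum_mul_right, PMF.tsum_toReal, one_mul]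

theorem histExp_const_mul (t : ℕ) (f : List (Fin n) → ℝ) (c : ℝ) :
    histExp zP t (fun h => c * f h) = c * histExp zP t f := by
  simp only [histExp, mul_left_comm _ c, tsum_mul_left]

end History

section Weights

variable {n : ℕ} (ℓ : ℕ → Fin n → ℝ) (η : ℝ) (z : List (Fin n) → Fin n → ℝ)

theorem expWeights_pos (h : List (Fin n)) (i : Fin n) : 0 < expWeights n ℓ η z h i := by
  induction h generalizing i with
  | nil =>
    have : 0 < n := i.pos
    simp only [expWeights]
    positivity
  | cons j h ih =>
    simp only [expWeights]
    exact div_pos (mul_pos (ih i) (Real.exp_pos _))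
      (Finset.sum_pos (fun a _ => mul_pos (ih a) (Real.exp_pos _)) ⟨i, Finset.mem_univ i⟩)

theorem sum_expWeights (hn : 0 < n) (h : List (Fin n)) : ∑ i, expWeights n ℓ η z h i = 1 := by
  cases h with
  | nil =>
    have : (n : ℝ) ≠ 0 := by positivity
    simp [expWeights, this]
  | cons j h =>
    simp only [expWeights]
    rw [← Finset.sum_div]
    refine div_self (ne_of_gt ?_)
    exact Finset.sum_pos (fun a _ => mul_pos (expWeights_pos ℓ η z h a) (Real.exp_pos _))
      ⟨⟨0, hn⟩, Finset.mem_univ _⟩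

theorem expWeights_le_one (h : List (Fin n)) (i : Fin n) : expWeights n ℓ η z h i ≤ 1 := by
  rw [← sum_expWeights ℓ η z i.pos h]
  exact Finset.single_le_sum (fun a _ => (expWeights_pos ℓ η z h a).le) (Finset.mem_univ i)

theorem Real.exp_neg_le_one_sub_add_sq {x : ℝ} (hx : 0 ≤ x) :
    Real.exp (-x) ≤ 1 - x + x ^ 2 := by
  have h1 : 1 + x ≤ Real.exp x := by linarith [Real.add_one_le_exp x]
  have h2 : 0 < 1 + x := by linarith
  rw [Real.exp_neg]
  calc (Real.exp x)⁻¹ ≤ (1 + x)⁻¹ := inv_anti₀ h2 h1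
    _ ≤ 1 - x + x ^ 2 := by
      rw [inv_le_iff_one_le_mul₀ h2]
      nlinarith [pow_nonneg hx 3]

/-- One round of exponential weights after sampling `i`, in terms of the log-weight of `a`. -/
theorem neg_log_expWeights_cons_le (hη : 0 ≤ η) (h : List (Fin n)) (i a : Fin n)
    (hnn : 0 ≤ ℓ h.length i / z h i) :
    -Real.log (expWeights n ℓ η z (i :: h) a) ≤ -Real.log (expWeights n ℓ η z h a)
      + η * (if a = i then ℓ h.length a / z h a else 0)
      - η * (expWeights n ℓ η z h i * (ℓ h.length i / z h i))
      + η ^ 2 * (expWeights n ℓ η z h i * (ℓ h.length i / z h i) ^ 2) := by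
  set w := expWeights n ℓ η z h with hw
  have hwpos : ∀ b, 0 < w b := expWeights_pos ℓ η z h
  set S := ∑ b, w b * Real.exp (-η * (if b = i then ℓ h.length b / z h b else 0)) with hS
  have hSpos : 0 < S :=
    Finset.sum_pos (fun b _ => mul_pos (hwpos b) (Real.exp_pos _)) ⟨i, Finset.mem_univ i⟩
  have hlog : Real.log (expWeights n ℓ η z (i :: h) a) = Real.log (w a)
      + -η * (if a = i then ℓ h.length a / z h a else 0) - Real.log S := by
    simp only [expWeights]
    rw [Real.log_div (mul_pos (hwpos a) (Real.exp_pos _)).ne' hSpos.ne',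
      Real.log_mul (hwpos a).ne' (Real.exp_pos _).ne', Real.log_exp]
  have hSeq : S = 1 + w i * (Real.exp (-(η * (ℓ h.length i / z h i))) - 1) := by
    have hsum : S - ∑ b, w b = w i * (Real.exp (-(η * (ℓ h.length i / z h i))) - 1) := by
      rw [hS, ← Finset.sum_sub_distrib, Finset.sum_eq_single i]
      · simp; ring
      · intro b _ hb
        simp [hb]
      · simp
    rw [sum_expWeights ℓ η z i.pos h] at hsum
    linarith
  have hexp := Real.exp_neg_le_one_sub_add_sq (mul_nonneg hη hnn)
  have hmul := mul_le_mul_of_nonneg_left hexp (hwpos i).le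
  have hlogS := Real.log_le_sub_one_of_pos hSpos
  rw [hlog]
  nlinarith

/-- One round of exponential weights in conditional expectation. -/
theorem sum_mul_neg_log_expWeights_cons_le {C : ℝ} (hη : 0 ≤ η) (h : List (Fin n)) (a : Fin n)
    (hℓ : ∀ i, ℓ h.length i ∈ Set.Icc (0 : ℝ) 1) (hz : ∀ i, 0 < z h i)
    (hz_sum : ∑ i, z h i = 1) (hdom : ∀ i, expWeights n ℓ η z h i ≤ C * z h i) :
    ∑ i, z h i * -Real.log (expWeights n ℓ η z (i :: h) a) ≤
      -Real.log (expWeights n ℓ η z h a) + η * ℓ h.length a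
      - η * ∑ i, ℓ h.length i * expWeights n ℓ η z h i + η ^ 2 * (C * n) := by
  set w := expWeights n ℓ η z h with hw
  have hstep : ∀ i, z h i * -Real.log (expWeights n ℓ η z (i :: h) a) ≤
      z h i * -Real.log (w a) + (if a = i then η * ℓ h.length a else 0)
        - η * (ℓ h.length i * w i) + η ^ 2 * C := by
    intro i
    have hzi := hz i
    obtain ⟨hl0, hl1⟩ := hℓ i
    refine (mul_le_mul_of_nonneg_left (neg_log_expWeights_cons_le ℓ η z hη h i a
      (div_nonneg hl0 hzi.le)) hzi.le).trans ?_
    have hfirst : z h i * (η * (if a = i then ℓ h.length a / z h a else 0)) =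
        if a = i then η * ℓ h.length a else 0 := by
      split_ifs with hai
      · subst hai
        field_simp
      · simp
    have hlin : z h i * (η * (w i * (ℓ h.length i / z h i))) = η * (ℓ h.length i * w i) := by
      field_simp
    have hquad : z h i * (w i * (ℓ h.length i / z h i) ^ 2) ≤ C := by
      have hwC : w i / z h i ≤ C := by
        rw [div_le_iff₀ hzi]
        exact hdom i
      have hw0 : 0 ≤ w i / z h i := div_nonneg (expWeights_pos ℓ η z h i).le hzi.le
      calc z h i * (w i * (ℓ h.length i / z h i) ^ 2)
          = w i / z h i * ℓ h.length i ^ 2 := by field_simp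
        _ ≤ w i / z h i * 1 := mul_le_mul_of_nonneg_left (pow_le_one₀ hl0 hl1) hw0
        _ ≤ C := by simpa using hwC
    have hquad' := mul_le_mul_of_nonneg_left hquad (sq_nonneg η)
    rw [← hw]
    linarith
  refine (Finset.sum_le_sum fun i _ => hstep i).trans (le_of_eq ?_)
  rw [Finset.sum_add_distrib, Finset.sum_sub_distrib, Finset.sum_add_distrib, ← Finset.sum_mul,
    hz_sum, ← Finset.mul_sum]
  simp
  ring

end Weights

section Potential

variable {n : ℕ} (ℓ : ℕ → Fin n → ℝ) (η : ℝ) (z : List (Fin n) → Fin n → ℝ)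

/-- The cumulative loss of exponential weights over the first `t` rounds of a history `h` of
length `t`. -/
noncomputable def cumLoss (t : ℕ) (h : List (Fin n)) : ℝ :=
  ∑ s ∈ Finset.range t, ∑ i, ℓ s i * expWeights n ℓ η z (h.drop (t - s)) i

theorem cumLoss_succ_cons (t : ℕ) (i : Fin n) (h : List (Fin n)) :
    cumLoss ℓ η z (t + 1) (i :: h) =
      cumLoss ℓ η z t h + ∑ j, ℓ t j * expWeights n ℓ η z h j := by
  unfold cumLoss
  rw [Finset.sum_range_succ]
  congr 1
  · refine Finset.sum_congr rfl fun s hs => ?_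
    rw [Nat.succ_sub (Finset.mem_range.mp hs).le, List.drop_succ_cons]
  · simp

/-- Expected scaled cumulative loss plus negative log-weight of a fixed arm. -/
theorem histExp_cumLoss_sub_log_le {T : ℕ} {C : ℝ} (hη : 0 ≤ η)
    (hℓ : ∀ t i, ℓ t i ∈ Set.Icc (0 : ℝ) 1) (hC : 0 < C)
    (zP : List (Fin n) → PMF (Fin n)) (hz : ∀ h i, z h i = (zP h i).toReal)
    (hdom : ∀ h : List (Fin n), h.length < T → ∀ i, expWeights n ℓ η z h i ≤ C * z h i)
    (a : Fin n) (t : ℕ) (ht : t ≤ T) :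
    histExp zP t (fun h => η * cumLoss ℓ η z t h + -Real.log (expWeights n ℓ η z h a)) ≤
      Real.log n + η * ∑ s ∈ Finset.range t, ℓ s a + t * (η ^ 2 * (C * n)) := by
  induction t with
  | zero => simp [histExp_zero, cumLoss, expWeights]
  | succ t ih =>
    have hmono : histExp zP (t + 1)
        (fun h => η * cumLoss ℓ η z (t + 1) h + -Real.log (expWeights n ℓ η z h a)) ≤
        histExp zP t (fun h => (η * cumLoss ℓ η z t h + -Real.log (expWeights n ℓ η z h a)) +
          (η * ℓ t a + η ^ 2 * (C * n))) := by
      rw [histExp_succ]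
      refine histExp_mono zP t fun h hh => ?_
      subst hh
      have hzpos : ∀ i, 0 < z h i := fun i => pos_of_mul_pos_right
        ((expWeights_pos ℓ η z h i).trans_le (hdom h ht i)) hC.le
      have hzsum : ∑ i, z h i = 1 := by
        simp only [hz]
        rw [← tsum_fintype (L := .unconditional _), PMF.tsum_toReal]
      have hround := sum_mul_neg_log_expWeights_cons_le ℓ η z hη h a (hℓ h.length) hzpos hzsum
        (hdom h ht)
      simp only [← hz, cumLoss_succ_cons, mul_add, Finset.sum_add_distrib, ← Finset.sum_mul,
        hzsum] at hround ⊢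
      linarith
    rw [histExp_add_const] at hmono
    have := ih (by omega)
    rw [Finset.sum_range_succ]
    push_cast
    linarith

end Potential

/-- Regret of exponential weights (EXP3-type) with a general
importance-weighted loss estimator.  If at every round the sampling distribution `z`
dominates the current weights, `w t i ≤ C * z t i`, and
`η = √(log n / (T n C))`, then the expected regret against any fixed arm `i*` is at most
`2 √(C n T log n)`. -/
theorem exp3_general_estimator_regret (n T : ℕ) (C : ℝ)
    (hn : 2 ≤ n) (hT : 1 ≤ T) (hC : 1 ≤ C)
    (ℓ : ℕ → Fin n → ℝ) (hℓ : ∀ t i, ℓ t i ∈ Set.Icc (0 : ℝ) 1)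
    (zP : List (Fin n) → PMF (Fin n)) (z : List (Fin n) → Fin n → ℝ)
    (hz : ∀ h i, z h i = (zP h i).toReal)
    (η : ℝ) (hη : η = Real.sqrt (Real.log n / (T * n * C)))
    (hdom : ∀ h : List (Fin n), h.length < T → ∀ i,
      expWeights n ℓ η z h i ≤ C * z h i)
    (istar : Fin n) :
    (∑' h : List (Fin n), (sampleHist n zP T h).toReal *
        ∑ t ∈ Finset.range T, ∑ i, ℓ t i * expWeights n ℓ η z (h.drop (T - t)) i)
      - ∑ t ∈ Finset.range T, ℓ t istar
      ≤ 2 * Real.sqrt (C * n * T * Real.log n) := by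
  have hlogn : 0 < Real.log n := Real.log_pos (by exact_mod_cast hn)
  have hn0 : (0 : ℝ) < n := by positivity
  have hT0 : (0 : ℝ) < T := by exact_mod_cast hT
  have hC0 : 0 < C := by linarith
  have hηpos : 0 < η := by rw [hη]; positivity
  have hpot := histExp_cumLoss_sub_log_le ℓ η z hηpos.le hℓ hC0 zP hz hdom istar T le_rfl
  have hloss : η * histExp zP T (cumLoss ℓ η z T) ≤
      Real.log n + η * ∑ s ∈ Finset.range T, ℓ s istar + T * (η ^ 2 * (C * n)) := by
    rw [← histExp_const_mul]
    refine (histExp_mono zP T fun h _ => ?_).trans hpot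
    have := Real.log_nonpos (expWeights_pos ℓ η z h istar).le (expWeights_le_one ℓ η z h istar)
    linarith
  have hη2 : η ^ 2 * (T * n * C) = Real.log n := by
    rw [hη, Real.sq_sqrt (by positivity)]
    field_simp
  have hsqrt : Real.sqrt (C * n * T * Real.log n) = η * (T * n * C) := by
    rw [← hη2, show C * n * T * (η ^ 2 * (T * n * C)) = (η * (T * n * C)) ^ 2 by ring,
      Real.sqrt_sq (by positivity)]
  change histExp zP T (cumLoss ℓ η z T) - _ ≤ _
  rw [hsqrt]
  refine le_of_mul_le_mul_left ?_ hηpos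
  nlinarith
end

section
/- Let B ≥ 1 and fix nonnegative step sizes η_1,…,η_B. Let pseudo-weights w̃_t(k) ≥ 0 for t = 1,…,T and k ∈ [B] evolve as follows: w̃_{t+1}(k) = 1 whenever k is 'reset' at time t+1, and w̃_{t+1}(k) = w̃_t(k)·(1 + η_k·r_t(k)) otherwise, for some real numbers r_t(k). Assume: (i) Σ_k w̃_1(k) ≤ 1; (ii) for every t, all factors satisfy 1 + η_k·r_t(k) ≥ 0; (iii) for every t, Σ_{k=1}^B η_k·w̃_t(k)·r_t(k) ≤ 0; (iv) for every t, the number of indices reset at time t+1 is at most log₂(t+1) + 1. Then for every t ∈ [T], Σ_{k=1}^B w̃_t(k) ≤ t·(log₂ t + 1). -/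
/-- Potential-function bound for the StABL meta-algorithm.
Pseudo-weights `w̃ t k ≥ 0` are reset to `1` at reset times and otherwise updated
multiplicatively by `1 + η k * r t k`.  Under the stated conditions, for every
`1 ≤ t ≤ T` the total pseudo-weight satisfies `∑ k, w̃ t k ≤ t (log₂ t + 1)`. -/
theorem pseudo_weight_potential_bound {B : ℕ} (hB : 1 ≤ B) (T : ℕ)
    (η : Fin B → ℝ) (hη : ∀ k, 0 ≤ η k)
    (w : ℕ → Fin B → ℝ) (r : ℕ → Fin B → ℝ) (reset : ℕ → Finset (Fin B))
    (hw_nonneg : ∀ t k, 0 ≤ w t k)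
    (hupd : ∀ t, 1 ≤ t → ∀ k : Fin B,
      (k ∈ reset (t + 1) → w (t + 1) k = 1) ∧
      (k ∉ reset (t + 1) → w (t + 1) k = w t k * (1 + η k * r t k)))
    (hinit : ∑ k, w 1 k ≤ 1)
    (hfac : ∀ t, 1 ≤ t → ∀ k, 0 ≤ 1 + η k * r t k)
    (hzero : ∀ t, 1 ≤ t → ∑ k, η k * w t k * r t k ≤ 0)
    (hreset : ∀ t, 1 ≤ t → ((reset (t + 1)).card : ℝ) ≤ Real.logb 2 (t + 1) + 1) :
    ∀ t, 1 ≤ t → t ≤ T → ∑ k, w t k ≤ t * (Real.logb 2 t + 1) := by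
  intro t ht _
  induction t, ht using Nat.le_induction with
  | base => simpa using hinit
  | succ t ht ih =>
    have hstep : ∀ k, w (t + 1) k ≤
        w t k + η k * w t k * r t k + if k ∈ reset (t + 1) then 1 else 0 := by
      intro k
      by_cases hk : k ∈ reset (t + 1)
      · rw [(hupd t ht k).1 hk, if_pos hk]
        linarith [mul_nonneg (hw_nonneg t k) (hfac t ht k)]
      · rw [(hupd t ht k).2 hk, if_neg hk]
        linarith
    have hsum : ∑ k, w (t + 1) k ≤
        ∑ k, w t k + ∑ k, η k * w t k * r t k + ((reset (t + 1)).card : ℝ) := by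
      refine (Finset.sum_le_sum fun k _ => hstep k).trans_eq ?_
      simp [Finset.sum_add_distrib]
    have ht_pos : (0 : ℝ) < t := by exact_mod_cast ht
    have hlog : Real.logb 2 t ≤ Real.logb 2 (t + 1) :=
      Real.logb_le_logb_of_le one_lt_two ht_pos (by linarith)
    have hmul := mul_le_mul_of_nonneg_left hlog ht_pos.le
    push_cast
    linarith [ih (by omega), hzero t ht, hreset t ht]
end

section
/- For any integers 1 ≤ j ≤ s, the set of integers {j, j+1, …, s} can be partitioned into at most 2·(⌊log₂(s − j + 1)⌋ + 1) pairwise disjoint consecutive blocks, each of which has the form {q·2^k, q·2^k + 1, …, (q+1)·2^k − 1} for some integers k ≥ 0 and q ≥ 1. -/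
/-- The geometric interval `{q·2^k, …, (q+1)·2^k − 1}` indexed by `p = (k, q)`. -/
abbrev geometricBlock (p : ℕ × ℕ) : Finset ℕ :=
  Finset.Ico (p.2 * 2 ^ p.1) ((p.2 + 1) * 2 ^ p.1)

/-- `{a, …, b − 1}` is a disjoint union of at most `n` geometric intervals. -/
def HasGeometricPartition (a b n : ℕ) : Prop :=
  ∃ P : Finset (ℕ × ℕ), (∀ p ∈ P, 1 ≤ p.2) ∧
    (P : Set (ℕ × ℕ)).PairwiseDisjoint geometricBlock ∧
    Finset.Ico a b = P.biUnion geometricBlock ∧ P.card ≤ n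

theorem mem_geometricBlock_succ (k q x : ℕ) :
    x ∈ geometricBlock (k + 1, q) ↔ x / 2 ∈ geometricBlock (k, q) := by
  simp only [Finset.mem_Ico, pow_succ, ← mul_assoc]
  omega

namespace HasGeometricPartition

theorem refl (a n : ℕ) : HasGeometricPartition a a n :=
  ⟨∅, by simp⟩

theorem singleton {a : ℕ} (ha : 1 ≤ a) : HasGeometricPartition a (a + 1) 1 :=
  ⟨{(0, a)}, by simp [ha, geometricBlock]⟩

theorem append {a b c m n : ℕ} (hab : a ≤ b) (hbc : b ≤ c)
    (h₁ : HasGeometricPartition a b m) (h₂ : HasGeometricPartition b c n) :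
    HasGeometricPartition a c (m + n) := by
  obtain ⟨P, hP, dP, uP, cP⟩ := h₁
  obtain ⟨Q, hQ, dQ, uQ, cQ⟩ := h₂
  refine ⟨P ∪ Q, ?_, ?_, ?_, (Finset.card_union_le P Q).trans (add_le_add cP cQ)⟩
  · intro p hp
    exact (Finset.mem_union.1 hp).elim (hP p) (hQ p)
  · rw [Finset.coe_union, Set.pairwiseDisjoint_union]
    refine ⟨dP, dQ, fun p hp q hq _ => ?_⟩
    refine (Finset.Ico_disjoint_Ico_consecutive a b c).mono ?_ ?_
    · rw [uP]
      exact Finset.subset_biUnion_of_mem geometricBlock hp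
    · rw [uQ]
      exact Finset.subset_biUnion_of_mem geometricBlock hq
  · rw [Finset.union_biUnion, ← uP, ← uQ, Finset.Ico_union_Ico_eq_Ico hab hbc]

theorem double {a b n : ℕ} (h : HasGeometricPartition a b n) :
    HasGeometricPartition (2 * a) (2 * b) n := by
  obtain ⟨P, hP, dP, uP, cP⟩ := h
  refine ⟨P.image fun p => (p.1 + 1, p.2), ?_, ?_, ?_, Finset.card_image_le.trans cP⟩
  · exact Finset.forall_mem_image.2 hP
  · intro p hp q hq hpq
    obtain ⟨p, hpP, rfl⟩ := Finset.mem_image.1 hp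
    obtain ⟨q, hqP, rfl⟩ := Finset.mem_image.1 hq
    have hd := dP hpP hqP fun h => hpq (by rw [h])
    refine Finset.disjoint_left.2 fun x hx hx' => ?_
    exact Finset.disjoint_left.1 hd ((mem_geometricBlock_succ _ _ _).1 hx)
      ((mem_geometricBlock_succ _ _ _).1 hx')
  · ext x
    have hx : x ∈ Finset.Ico (2 * a) (2 * b) ↔ x / 2 ∈ Finset.Ico a b := by
      simp only [Finset.mem_Ico]
      omega
    rw [hx, uP, Finset.image_biUnion]
    simp only [Finset.mem_biUnion, mem_geometricBlock_succ]

theorem of_sub_lt_two_pow {a b t : ℕ} (ha : 1 ≤ a) (hab : a ≤ b) (h : b - a < 2 ^ t) :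
    HasGeometricPartition a b (2 * t) := by
  induction t generalizing a b with
  | zero =>
    obtain rfl : a = b := by rw [pow_zero] at h; omega
    exact refl a _
  | succ t ih =>
    obtain rfl | hlt := hab.eq_or_lt
    · exact refl a _
    rw [pow_succ] at h
    have left : HasGeometricPartition a (2 * ((a + 1) / 2)) 1 := by
      obtain h | h : 2 * ((a + 1) / 2) = a ∨ 2 * ((a + 1) / 2) = a + 1 := by omega
      · rw [h]
        exact refl a 1
      · rw [h]
        exact singleton ha
    have right : HasGeometricPartition (2 * (b / 2)) b 1 := by
      obtain h | h : b = 2 * (b / 2) ∨ b = 2 * (b / 2) + 1 := by omega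
      · rw [← h]
        exact refl b 1
      · nth_rw 2 [h]
        exact singleton (by omega)
    have middle := (ih (a := (a + 1) / 2) (b := b / 2) (by omega) (by omega) (by omega)).double
    have key := (left.append (by omega) (by omega) middle).append (by omega) (by omega) right
    rwa [show 1 + 2 * t + 1 = 2 * (t + 1) by ring] at key

end HasGeometricPartition

/-- Dyadic decomposition of intervals (Daniely et al.).
For integers `1 ≤ j ≤ s`, the set `{j, …, s}` can be partitioned into at most
`2 (⌊log₂ (s − j + 1)⌋ + 1)` pairwise disjoint consecutive blocks, each of the form
`{q·2^k, …, (q+1)·2^k − 1}` with `k ≥ 0` and `q ≥ 1`. -/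
theorem geometric_interval_decomposition (j s : ℕ) (hj : 1 ≤ j) (hjs : j ≤ s) :
    ∃ P : Finset (ℕ × ℕ),
      (∀ p ∈ P, 1 ≤ p.2) ∧
      (P : Set (ℕ × ℕ)).PairwiseDisjoint
        (fun p => Finset.Ico (p.2 * 2 ^ p.1) ((p.2 + 1) * 2 ^ p.1)) ∧
      Finset.Icc j s = P.biUnion (fun p => Finset.Ico (p.2 * 2 ^ p.1) ((p.2 + 1) * 2 ^ p.1)) ∧
      P.card ≤ 2 * (Nat.log 2 (s - j + 1) + 1) := by
  have h : s + 1 - j < 2 ^ (Nat.log 2 (s - j + 1) + 1) := by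
    rw [show s + 1 - j = s - j + 1 by omega]
    exact Nat.lt_pow_succ_log_self one_lt_two _
  obtain ⟨P, hP, dP, uP, cP⟩ :=
    HasGeometricPartition.of_sub_lt_two_pow hj (Nat.le_succ_of_le hjs) h
  refine ⟨P, hP, dP, ?_, cP⟩
  rw [← uP]
  ext x
  simp
end

section
/- Let f : ℝ^d → ℝ be Lipschitz (d ≥ 1), let δ > 0, and define the ball-smoothed function f̂(x) = E_{v ∼ Unif(𝔹^d)}[f(x + δ·v)], where Unif(𝔹^d) is the uniform probability measure on the closed unit Euclidean ball. Then f̂ is differentiable and for every x ∈ ℝ^d, ∇f̂(x) = (d/δ) · E_{u ∼ Unif(S^{d−1})}[f(x + δ·u)·u], where Unif(S^{d−1}) is the uniform probability measure on the unit Euclidean sphere. -/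
open MeasureTheory

/-- The uniform probability measure on the closed unit Euclidean ball in `ℝ^d`. -/
noncomputable def uniformUnitBall (d : ℕ) : Measure (EuclideanSpace ℝ (Fin d)) :=
  (volume (Metric.closedBall (0 : EuclideanSpace ℝ (Fin d)) 1))⁻¹ •
    volume.restrict (Metric.closedBall (0 : EuclideanSpace ℝ (Fin d)) 1)

/-- The uniform probability measure on the unit Euclidean sphere in `ℝ^d`,
i.e. the normalized `(d−1)`-dimensional Hausdorff measure on the sphere. -/
noncomputable def uniformUnitSphere (d : ℕ) : Measure (EuclideanSpace ℝ (Fin d)) :=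
  ((μH[(d : ℝ) - 1] : Measure (EuclideanSpace ℝ (Fin d)))
      (Metric.sphere (0 : EuclideanSpace ℝ (Fin d)) 1))⁻¹ •
    (μH[(d : ℝ) - 1] : Measure (EuclideanSpace ℝ (Fin d))).restrict
      (Metric.sphere (0 : EuclideanSpace ℝ (Fin d)) 1)

open Metric Set Filter Topology
open scoped NNReal ENNReal RealInnerProductSpace

section InvariantMeasures

variable {E : Type*} [NormedAddCommGroup E] [InnerProductSpace ℝ E] [MeasurableSpace E]
  [BorelSpace E]

/-- The characteristic function of a rotation-invariant measure is radial. -/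
lemma charFun_eq_of_norm_eq {μ : Measure E} (hμ : ∀ φ : E ≃ₗᵢ[ℝ] E, μ.map φ = μ)
    {s t : E} (h : ‖s‖ = ‖t‖) : charFun μ s = charFun μ t := by
  set φ : E ≃ₗᵢ[ℝ] E := (ℝ ∙ (s - t))ᗮ.reflection
  have hst : φ s = t := Submodule.reflection_sub h
  conv_rhs => rw [← hμ φ]
  rw [charFun_apply, charFun_apply, integral_map φ.continuous.measurable.aemeasurable
    (by fun_prop)]
  simp [← hst]

/-- A rotation-invariant probability measure carried by the unit sphere is unique. -/
theorem eq_of_forall_map_linearIsometryEquiv_eq [CompleteSpace E] [SecondCountableTopology E]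
    {μ ν : Measure E} [IsProbabilityMeasure μ] [IsProbabilityMeasure ν]
    (hμ : ∀ φ : E ≃ₗᵢ[ℝ] E, μ.map φ = μ) (hν : ∀ φ : E ≃ₗᵢ[ℝ] E, ν.map φ = ν)
    (hμs : ∀ᵐ x ∂μ, ‖x‖ = 1) (hνs : ∀ᵐ x ∂ν, ‖x‖ = 1) : μ = ν := by
  refine Measure.ext_of_charFun (funext fun t ↦ ?_)
  have radial {ρ σ : Measure E} [IsProbabilityMeasure σ]
      (hρ : ∀ φ : E ≃ₗᵢ[ℝ] E, ρ.map φ = ρ) (hσ : ∀ᵐ x ∂σ, ‖x‖ = 1) :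
      charFun ρ t = ∫ y, charFun ρ (‖t‖ • y) ∂σ := by
    rw [integral_congr_ae (g := fun _ ↦ charFun ρ t)]
    · simp
    · filter_upwards [hσ] with y hy
      exact charFun_eq_of_norm_eq hρ (by simp [norm_smul, hy])
  rw [radial hμ hνs, radial hν hμs]
  simp only [charFun_apply]
  rw [integral_integral_swap]
  · simp only [inner_smul_right, real_inner_comm]
  · refine Integrable.of_bound (C := 1) (Continuous.aestronglyMeasurable ?_) ?_
    · unfold Function.uncurry
      fun_prop
    · exact ae_of_all _ fun p ↦ by simp [Function.uncurry, Complex.norm_exp]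

lemma map_cond_linearIsometryEquiv {μ : Measure E} {s : Set E} (hs : MeasurableSet s)
    (φ : E ≃ₗᵢ[ℝ] E) (hμ : μ.map φ = μ) (hφs : φ ⁻¹' s = s) :
    (ProbabilityTheory.cond μ s).map φ = ProbabilityTheory.cond μ s := by
  have h : (μ.restrict s).map φ = μ.restrict s := by
    conv_rhs => rw [← hμ, Measure.restrict_map φ.continuous.measurable hs, hφs]
  rw [ProbabilityTheory.cond, Measure.map_smul, h]

end InvariantMeasures

section SphereHausdorff

lemma lipschitzOnWith_inv_norm_smul {E : Type*} [NormedAddCommGroup E] [NormedSpace ℝ E] :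
    LipschitzOnWith 2 (fun x : E ↦ ‖x‖⁻¹ • x) {x | 1 ≤ ‖x‖} := by
  refine LipschitzOnWith.of_dist_le_mul fun x hx y hy ↦ ?_
  have hx : 1 ≤ ‖x‖ := hx
  have hy : 1 ≤ ‖y‖ := hy
  have hx0 : 0 < ‖x‖ := by linarith
  have hy0 : 0 < ‖y‖ := by linarith
  have h : ‖x‖⁻¹ • x - ‖y‖⁻¹ • y = ‖x‖⁻¹ • ((x - y) + (‖y‖ - ‖x‖) • ‖y‖⁻¹ • y) := by
    rw [smul_add, smul_sub, sub_smul, smul_sub, smul_inv_smul₀ hy0.ne', inv_smul_smul₀ hx0.ne']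
    abel
  rw [dist_eq_norm, dist_eq_norm, h, norm_smul, norm_inv, norm_norm]
  have h1 : ‖(x - y) + (‖y‖ - ‖x‖) • ‖y‖⁻¹ • y‖ ≤ 2 * ‖x - y‖ := by
    refine (norm_add_le _ _).trans ?_
    have : ‖(‖y‖ - ‖x‖) • ‖y‖⁻¹ • y‖ ≤ ‖x - y‖ := by
      rw [norm_smul, norm_smul, norm_inv, norm_norm, inv_mul_cancel₀ hy0.ne', mul_one,
        norm_sub_rev x y]
      exact abs_norm_sub_norm_le y x
    linarith
  calc _ ≤ 1 * (2 * ‖x - y‖) := by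
        gcongr
        exact inv_le_one_of_one_le₀ hx
    _ = _ := by simp

lemma hausdorffMeasure_fin_pi_real (n : ℕ) : (μH[(n : ℝ)] : Measure (Fin n → ℝ)) = volume := by
  simpa only [Fintype.card_fin] using hausdorffMeasure_pi_real (ι := Fin n)

lemma hausdorffMeasure_sphere_ne_zero (n : ℕ) :
    (μH[(n : ℝ)] : Measure (EuclideanSpace ℝ (Fin (n + 1)))) (sphere 0 1) ≠ 0 := by
  let T : EuclideanSpace ℝ (Fin (n + 1)) → (Fin n → ℝ) := fun x i ↦ x i.succ
  have hT : LipschitzWith 1 T := LipschitzWith.of_dist_le_mul fun x y ↦ by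
    rw [NNReal.coe_one, one_mul]
    refine (dist_pi_le_iff dist_nonneg).2 fun i ↦ ?_
    rw [dist_eq_norm, dist_eq_norm]
    exact PiLp.norm_apply_le (x - y) i.succ
  have hsub : {w : Fin n → ℝ | ∑ i, w i ^ 2 < 1} ⊆ T '' sphere 0 1 := by
    intro w hw
    have hw : ∑ i, w i ^ 2 < 1 := hw
    refine ⟨WithLp.toLp 2 (Fin.cons √(1 - ∑ i, w i ^ 2) w), ?_, by ext i; simp [T]⟩
    rw [mem_sphere_zero_iff_norm, EuclideanSpace.norm_eq]
    simp [Fin.sum_univ_succ, Real.sq_sqrt (sub_nonneg.2 hw.le)]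
  have hopen : IsOpen {w : Fin n → ℝ | ∑ i, w i ^ 2 < 1} :=
    isOpen_lt (by fun_prop) continuous_const
  have hpos := hopen.measure_pos volume ⟨0, by simp⟩
  intro h
  have h1 := hT.hausdorffMeasure_image_le (Nat.cast_nonneg n) (sphere 0 1)
  rw [h, mul_zero, nonpos_iff_eq_zero] at h1
  have h2 := measure_mono_null hsub h1
  rw [hausdorffMeasure_fin_pi_real] at h2
  exact hpos.ne' h2

lemma hausdorffMeasure_sphere_ne_top (n : ℕ) :
    (μH[(n : ℝ)] : Measure (EuclideanSpace ℝ (Fin (n + 1)))) (sphere 0 1) ≠ ∞ := by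
  let J : Fin (n + 1) × Bool → (Fin n → ℝ) → EuclideanSpace ℝ (Fin (n + 1)) := fun p w ↦
    WithLp.toLp 2 (p.1.insertNth (if p.2 then (1 : ℝ) else -1) w)
  have hJ (p) : ∃ K, LipschitzWith K (J p) := by
    refine ⟨_, (PiLp.lipschitzWith_toLp 2 (fun _ : Fin (n + 1) ↦ ℝ)).comp
      (LipschitzWith.of_dist_le_mul (K := 1) fun v w ↦ ?_)⟩
    rw [Fin.dist_insertNth_insertNth]
    simp
  have hJ1 (p w) : 1 ≤ ‖J p w‖ := by
    refine le_trans ?_ (PiLp.norm_apply_le (J p w) p.1)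
    cases h : p.2 <;> simp [J, h]
  have hcover : sphere (0 : EuclideanSpace ℝ (Fin (n + 1))) 1 ⊆
      ⋃ p, (fun w ↦ ‖J p w‖⁻¹ • J p w) '' closedBall 0 1 := by
    intro u hu
    rw [mem_sphere_zero_iff_norm] at hu
    obtain ⟨i, hi⟩ := Finite.exists_max fun i ↦ |u i|
    have hui : u i ≠ 0 := by
      intro h0
      have : u = 0 := by
        ext j
        have := hi j
        rw [h0, abs_zero] at this
        simpa using abs_nonpos_iff.1 this
      simp [this] at hu
    have habs : 0 < |u i| := abs_pos.2 hui
    have hJu : J (i, decide (0 < u i)) (fun j ↦ |u i|⁻¹ * u (i.succAbove j)) = |u i|⁻¹ • u := by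
      ext j
      rcases Fin.eq_self_or_eq_succAbove i j with rfl | ⟨k, rfl⟩
      · rcases hui.lt_or_gt with h | h
        · simp [J, h.not_gt, abs_of_neg h, inv_neg, hui]
        · simp [J, h, abs_of_pos h, hui]
      · simp [J]
    refine mem_iUnion.2 ⟨(i, decide (0 < u i)), fun j ↦ |u i|⁻¹ * u (i.succAbove j), ?_, ?_⟩
    · rw [mem_closedBall_zero_iff, pi_norm_le_iff_of_nonneg zero_le_one]
      intro j
      rw [norm_mul, norm_inv, Real.norm_eq_abs, abs_abs, Real.norm_eq_abs, inv_mul_le_one₀ habs]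
      exact hi _
    · simp only [hJu, norm_smul, hu, norm_inv, Real.norm_eq_abs, abs_abs, mul_one, inv_inv]
      exact smul_inv_smul₀ habs.ne' u
  refine ne_top_of_le_ne_top ?_ (measure_mono hcover)
  refine ne_top_of_le_ne_top ?_ (measure_iUnion_le _)
  rw [tsum_fintype]
  refine ENNReal.sum_ne_top.2 fun p _ ↦ ?_
  obtain ⟨K, hK⟩ := hJ p
  have hL : LipschitzOnWith (2 * K) (fun w ↦ ‖J p w‖⁻¹ • J p w) (closedBall 0 1) :=
    lipschitzOnWith_inv_norm_smul.comp hK.lipschitzOnWith fun w _ ↦ hJ1 p w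
  refine ne_top_of_le_ne_top ?_ (hL.hausdorffMeasure_image_le (Nat.cast_nonneg n))
  refine ENNReal.mul_ne_top (ENNReal.rpow_ne_top_of_nonneg (Nat.cast_nonneg n)
    ENNReal.coe_ne_top) ?_
  rw [hausdorffMeasure_fin_pi_real]
  exact (isCompact_closedBall _ _).measure_ne_top

end SphereHausdorff

section UniformUnitSphere

variable {d : ℕ}

lemma isProbabilityMeasure_uniformUnitSphere (hd : 1 ≤ d) :
    IsProbabilityMeasure (uniformUnitSphere d) := by
  obtain ⟨n, rfl⟩ := Nat.exists_eq_add_of_le' hd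
  refine ProbabilityTheory.cond_isProbabilityMeasure_of_finite ?_ ?_ <;>
    rw [Nat.cast_add, Nat.cast_one, add_sub_cancel_right]
  exacts [hausdorffMeasure_sphere_ne_zero n, hausdorffMeasure_sphere_ne_top n]

lemma ae_norm_eq_one_uniformUnitSphere : ∀ᵐ u ∂uniformUnitSphere d, ‖u‖ = 1 :=
  Measure.ae_smul_measure
    ((ae_restrict_mem isClosed_sphere.measurableSet).mono fun _ hu ↦
      mem_sphere_zero_iff_norm.1 hu) _

lemma map_uniformUnitSphere (φ : EuclideanSpace ℝ (Fin d) ≃ₗᵢ[ℝ] EuclideanSpace ℝ (Fin d)) :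
    (uniformUnitSphere d).map φ = uniformUnitSphere d :=
  map_cond_linearIsometryEquiv isClosed_sphere.measurableSet φ
    (φ.toIsometryEquiv.measurePreserving_hausdorffMeasure _).map_eq (by ext x; simp)

/-- The radial projection to the sphere of the uniform measure on a rotation-invariant set is
uniform. -/
lemma map_inv_norm_smul_cond (hd : 1 ≤ d) {A : Set (EuclideanSpace ℝ (Fin d))}
    (hA : MeasurableSet A) (hA0 : (0 : EuclideanSpace ℝ (Fin d)) ∉ A)
    (hAinv : ∀ φ : EuclideanSpace ℝ (Fin d) ≃ₗᵢ[ℝ] EuclideanSpace ℝ (Fin d), φ ⁻¹' A = A)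
    (h0 : volume A ≠ 0) (htop : volume A ≠ ∞) :
    (ProbabilityTheory.cond volume A).map (fun x ↦ ‖x‖⁻¹ • x) = uniformUnitSphere d := by
  have hN : Measurable fun x : EuclideanSpace ℝ (Fin d) ↦ ‖x‖⁻¹ • x := by fun_prop
  have := isProbabilityMeasure_uniformUnitSphere hd
  have := ProbabilityTheory.cond_isProbabilityMeasure_of_finite h0 htop
  have := Measure.isProbabilityMeasure_map (μ := ProbabilityTheory.cond volume A) hN.aemeasurable
  refine eq_of_forall_map_linearIsometryEquiv_eq (fun φ ↦ ?_) map_uniformUnitSphere ?_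
    ae_norm_eq_one_uniformUnitSphere
  · conv_rhs =>
      rw [← map_cond_linearIsometryEquiv hA φ φ.measurePreserving.map_eq (hAinv φ),
        Measure.map_map hN φ.continuous.measurable]
    rw [Measure.map_map φ.continuous.measurable hN]
    congr 1
    ext1 x
    simp
  · rw [ae_map_iff hN.aemeasurable (isClosed_eq continuous_norm continuous_const).measurableSet]
    refine Measure.ae_smul_measure ((ae_restrict_mem hA).mono fun x hx ↦ ?_) _
    have : x ≠ 0 := fun h ↦ hA0 (h ▸ hx)
    simp [norm_smul, this]

lemma setIntegral_inv_norm_smul (hd : 1 ≤ d) {A : Set (EuclideanSpace ℝ (Fin d))}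
    (hA : MeasurableSet A) (hA0 : (0 : EuclideanSpace ℝ (Fin d)) ∉ A)
    (hAinv : ∀ φ : EuclideanSpace ℝ (Fin d) ≃ₗᵢ[ℝ] EuclideanSpace ℝ (Fin d), φ ⁻¹' A = A)
    (h0 : volume A ≠ 0) (htop : volume A ≠ ∞) {H : EuclideanSpace ℝ (Fin d) → ℝ}
    (hH : Continuous H) :
    ∫ x in A, H (‖x‖⁻¹ • x) = volume.real A * ∫ u, H u ∂uniformUnitSphere d := by
  rw [← map_inv_norm_smul_cond hd hA hA0 hAinv h0 htop, integral_map (by fun_prop)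
    hH.aestronglyMeasurable, ProbabilityTheory.cond, integral_smul_measure, smul_eq_mul,
    ENNReal.toReal_inv, ← measureReal_def, mul_inv_cancel_left₀]
  exact ENNReal.toReal_ne_zero.2 ⟨h0, htop⟩

end UniformUnitSphere

section Divergence

variable {E : Type*} [NormedAddCommGroup E]

/-- The radial function equal to `1` on the unit ball, vanishing outside of the ball of radius
`1 + ε`, and affine in the norm in between. -/
noncomputable def radialCutoff (ε : ℝ) (x : E) : ℝ :=
  max 0 (min 1 (ε⁻¹ * (1 + ε - ‖x‖)))

lemma lipschitzWith_radialCutoff {ε : ℝ} (hε : 0 < ε) :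
    LipschitzWith (Real.toNNReal ε⁻¹) (radialCutoff ε : E → ℝ) := by
  refine LipschitzWith.const_max (LipschitzWith.const_min
    (LipschitzWith.of_dist_le_mul fun x y ↦ ?_) 1) 0
  rw [Real.coe_toNNReal _ (inv_nonneg.2 hε.le), Real.dist_eq, ← mul_sub, abs_mul,
    abs_of_pos (inv_pos.2 hε), dist_eq_norm, norm_sub_rev x y]
  gcongr
  rw [sub_sub_sub_cancel_left]
  exact abs_norm_sub_norm_le y x

lemma radialCutoff_eq_one {ε : ℝ} (hε : 0 < ε) {x : E} (hx : ‖x‖ ≤ 1) :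
    radialCutoff ε x = 1 := by
  have : 1 ≤ ε⁻¹ * (1 + ε - ‖x‖) := by
    rw [le_inv_mul_iff₀ hε]
    linarith
  simp [radialCutoff, this]

lemma radialCutoff_eq_zero {ε : ℝ} (hε : 0 < ε) {x : E} (hx : 1 + ε ≤ ‖x‖) :
    radialCutoff ε x = 0 := by
  have : ε⁻¹ * (1 + ε - ‖x‖) ≤ 0 :=
    mul_nonpos_of_nonneg_of_nonpos (inv_nonneg.2 hε.le) (by linarith)
  exact max_eq_left ((min_le_right _ _).trans this)

lemma radialCutoff_eq_of_mem {ε : ℝ} (hε : 0 < ε) {x : E} (hx : 1 ≤ ‖x‖) (hx' : ‖x‖ ≤ 1 + ε) :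
    radialCutoff ε x = ε⁻¹ * (1 + ε - ‖x‖) := by
  rw [radialCutoff, min_eq_right, max_eq_right]
  · exact mul_nonneg (inv_nonneg.2 hε.le) (by linarith)
  · rw [inv_mul_le_iff₀ hε]
    linarith

lemma norm_radialCutoff_le_one (ε : ℝ) (x : E) : ‖radialCutoff ε x‖ ≤ 1 := by
  rw [Real.norm_eq_abs, abs_of_nonneg (le_max_left _ _)]
  exact max_le zero_le_one (min_le_left _ _)

variable [InnerProductSpace ℝ E]

lemma hasLineDerivAt_norm {x : E} (hx : x ≠ 0) (e : E) :
    HasLineDerivAt ℝ (fun y ↦ ‖y‖) ⟪‖x‖⁻¹ • x, e⟫ x e := by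
  have h : HasFDerivAt (fun y : E ↦ √(‖y‖ ^ 2)) _ x :=
    ((hasStrictFDerivAt_norm_sq x).hasFDerivAt).sqrt (by simpa using hx)
  simp only [Real.sqrt_sq (norm_nonneg _)] at h
  convert h.hasLineDerivAt e using 1
  simp [inner_smul_left]
  field_simp

lemma lineDeriv_radialCutoff {ε : ℝ} (hε : 0 < ε) {x : E} (hx1 : ‖x‖ ≠ 1) (hxε : ‖x‖ ≠ 1 + ε)
    (e : E) : lineDeriv ℝ (radialCutoff ε) x (-e) =
      (closedBall (0 : E) (1 + ε) \ closedBall 0 1).indicator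
        (fun y ↦ ε⁻¹ * ⟪‖y‖⁻¹ • y, e⟫) x := by
  have hcont : Tendsto (fun y : E ↦ ‖y‖) (𝓝 x) (𝓝 ‖x‖) := continuous_norm.continuousAt
  rcases hx1.lt_or_gt with h1 | h1
  · have : radialCutoff ε =ᶠ[𝓝 x] fun _ ↦ 1 := by
      filter_upwards [hcont.eventually_lt_const h1] with y hy
      exact radialCutoff_eq_one hε hy.le
    rw [this.lineDeriv_eq, indicator_of_notMem (by simp [h1.le])]
    simp [lineDeriv]
  rcases hxε.lt_or_gt with h2 | h2
  · have : radialCutoff ε =ᶠ[𝓝 x] fun y ↦ ε⁻¹ * (1 + ε - ‖y‖) := by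
      filter_upwards [hcont.eventually_lt_const h2, hcont.eventually_const_lt h1] with y hy hy'
      exact radialCutoff_eq_of_mem hε hy'.le hy.le
    have hx0 : x ≠ 0 := norm_pos_iff.1 (zero_lt_one.trans h1)
    have hd : HasLineDerivAt ℝ (fun y : E ↦ ε⁻¹ * (1 + ε - ‖y‖))
        (ε⁻¹ * -⟪‖x‖⁻¹ • x, -e⟫) x (-e) := by
      have := hasLineDerivAt_norm hx0 (-e)
      exact ((HasDerivAt.const_sub (1 + ε) this).const_mul ε⁻¹)
    rw [this.lineDeriv_eq, hd.lineDeriv, indicator_of_mem (by simp [h1, h2.le]), inner_neg_right,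
      neg_neg]
  · have : radialCutoff ε =ᶠ[𝓝 x] fun _ ↦ 0 := by
      filter_upwards [hcont.eventually_const_lt h2] with y hy
      exact radialCutoff_eq_zero hε hy.le
    rw [this.lineDeriv_eq, indicator_of_notMem (by simp [h2])]
    simp [lineDeriv]

variable [FiniteDimensional ℝ E] [MeasurableSpace E] [BorelSpace E]

lemma integral_lineDeriv_mul_radialCutoff {ε : ℝ} (hε : 0 < ε) {L : ℝ≥0} {g : E → ℝ}
    (hg : LipschitzWith L g) (e : E) :
    ∫ x, lineDeriv ℝ g x e * radialCutoff ε x =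
      ε⁻¹ * ∫ x in closedBall (0 : E) (1 + ε) \ closedBall 0 1, ⟪‖x‖⁻¹ • x, e⟫ * g x := by
  have hsupp : HasCompactSupport (radialCutoff ε : E → ℝ) :=
    HasCompactSupport.intro (isCompact_closedBall 0 (1 + ε)) fun x hx ↦
      radialCutoff_eq_zero hε (by simpa using (not_le.1 (by simpa using hx)).le)
  rw [hg.integral_lineDeriv_mul_eq (lipschitzWith_radialCutoff hε) hsupp e,
    ← integral_const_mul, ← integral_indicator
      (isClosed_closedBall.measurableSet.diff isClosed_closedBall.measurableSet)]
  have hs {r : ℝ} (hr : r ≠ 0) : ∀ᵐ x : E, ‖x‖ ≠ r := by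
    refine (measure_eq_zero_iff_ae_notMem.1
      (Measure.addHaar_sphere_of_ne_zero volume (0 : E) hr)).mono fun x hx ↦ ?_
    simpa using hx
  refine integral_congr_ae ?_
  filter_upwards [hs one_ne_zero, hs (r := 1 + ε) (by positivity)] with x h1 h2
  rw [lineDeriv_radialCutoff hε h1 h2]
  by_cases hx : x ∈ closedBall (0 : E) (1 + ε) \ closedBall 0 1
  · simp only [indicator_of_mem hx, mul_assoc]
  · simp only [indicator_of_notMem hx, zero_mul]

lemma abs_setIntegral_lineDeriv_sub_le {ε : ℝ} (hε : 0 < ε) {L : ℝ≥0} {g : E → ℝ}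
    (hg : LipschitzWith L g) (e : E) :
    |(∫ x in closedBall (0 : E) 1, lineDeriv ℝ g x e) -
        ε⁻¹ * ∫ x in closedBall (0 : E) (1 + ε) \ closedBall 0 1,
          ⟪‖x‖⁻¹ • x, e⟫ * g (‖x‖⁻¹ • x)| ≤
      2 * L * ‖e‖ * volume.real (closedBall (0 : E) (1 + ε) \ closedBall 0 1) := by
  set A := closedBall (0 : E) (1 + ε) \ closedBall 0 1
  have hB : MeasurableSet (closedBall (0 : E) 1) := isClosed_closedBall.measurableSet
  have hA : MeasurableSet A := isClosed_closedBall.measurableSet.diff hB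
  have hAfin : volume A < ∞ :=
    (measure_mono sdiff_subset).trans_lt (isCompact_closedBall _ _).measure_lt_top
  have hnorm (x : E) (hx : x ∈ A) : 1 < ‖x‖ ∧ ‖x‖ ≤ 1 + ε := by
    simpa [A, and_comm] using hx
  have hbound (x : E) : ‖lineDeriv ℝ g x e * radialCutoff ε x‖ ≤ L * ‖e‖ := by
    rw [norm_mul]
    calc _ ≤ L * ‖e‖ * 1 := by
          gcongr
          · exact norm_lineDeriv_le_of_lipschitz ℝ hg
          · exact norm_radialCutoff_le_one ε x
      _ = _ := mul_one _
  have hsplit : ∫ x, lineDeriv ℝ g x e * radialCutoff ε x =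
      (∫ x in closedBall (0 : E) 1, lineDeriv ℝ g x e) +
        ∫ x in A, lineDeriv ℝ g x e * radialCutoff ε x := by
    have hint : IntegrableOn (fun x ↦ lineDeriv ℝ g x e * radialCutoff ε x)
        (closedBall (0 : E) (1 + ε)) :=
      IntegrableOn.of_bound (isCompact_closedBall _ _).measure_lt_top
        ((measurable_lineDeriv hg.continuous).mul
          (lipschitzWith_radialCutoff hε).continuous.measurable).aestronglyMeasurable
        (L * ‖e‖) (ae_of_all _ hbound)
    have hBsub : closedBall (0 : E) 1 ⊆ closedBall 0 (1 + ε) :=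
      closedBall_subset_closedBall (by linarith)
    rw [← setIntegral_eq_integral_of_forall_compl_eq_zero (s := closedBall (0 : E) (1 + ε)),
      ← union_sdiff_cancel hBsub, setIntegral_union disjoint_sdiff_right hA
        (hint.mono_set hBsub) (hint.mono_set sdiff_subset)]
    · congr 1
      refine setIntegral_congr_fun hB fun x hx ↦ ?_
      rw [radialCutoff_eq_one hε (by simpa using hx), mul_one]
    · intro x hx
      rw [radialCutoff_eq_zero hε (not_le.1 (by simpa using hx)).le, mul_zero]
  have hnormalize (x : E) (hx : x ∈ A) : ‖‖x‖⁻¹ • x‖ = 1 := by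
    have := (zero_lt_one.trans (hnorm x hx).1).ne'
    rw [norm_smul, norm_inv, norm_norm, inv_mul_cancel₀ this]
  have hinner (x : E) (hx : x ∈ A) : |⟪‖x‖⁻¹ • x, e⟫| ≤ ‖e‖ := by
    simpa [hnormalize x hx] using abs_real_inner_le_norm (‖x‖⁻¹ • x) e
  have hint {G : E → ℝ} (hG : Measurable G) (hG' : ∀ x ∈ A, |G x| ≤ |g 0| + L * (1 + ε)) :
      IntegrableOn (fun x ↦ ⟪‖x‖⁻¹ • x, e⟫ * G x) A := by
    refine IntegrableOn.of_bound hAfin (by fun_prop) (‖e‖ * (|g 0| + L * (1 + ε)))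
      ((ae_restrict_mem hA).mono fun x hx ↦ ?_)
    rw [Real.norm_eq_abs, abs_mul]
    exact mul_le_mul (hinner x hx) (hG' x hx) (abs_nonneg _) (norm_nonneg _)
  have hgrowth (x : E) (hx : ‖x‖ ≤ 1 + ε) : |g x| ≤ |g 0| + L * (1 + ε) := by
    have h1 : |g x - g 0| ≤ L * ‖x‖ := by simpa [Real.dist_eq] using hg.dist_le_mul x 0
    have h2 : L * ‖x‖ ≤ L * (1 + ε) := by gcongr
    linarith [abs_sub_abs_le_abs_sub (g x) (g 0)]
  have hshell : |(∫ x in A, ⟪‖x‖⁻¹ • x, e⟫ * g x) -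
      ∫ x in A, ⟪‖x‖⁻¹ • x, e⟫ * g (‖x‖⁻¹ • x)| ≤ ‖e‖ * (L * ε) * volume.real A := by
    rw [← integral_sub (hint hg.continuous.measurable fun x hx ↦ hgrowth x (hnorm x hx).2)
      (hint (G := fun x ↦ g (‖x‖⁻¹ • x)) (hg.continuous.measurable.comp (by fun_prop))
        fun x hx ↦ hgrowth _ (by rw [hnormalize x hx]; linarith))]
    refine norm_setIntegral_le_of_norm_le_const (E := ℝ) hAfin fun x hx ↦ ?_
    rw [← mul_sub, norm_mul]
    obtain ⟨h1, h2⟩ := hnorm x hx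
    refine mul_le_mul (hinner x hx) ?_ (norm_nonneg _) (norm_nonneg _)
    have hdist : ‖x - ‖x‖⁻¹ • x‖ ≤ ε := by
      have hx0 : ‖x‖ ≠ 0 := by linarith
      have : x - ‖x‖⁻¹ • x = (‖x‖ - 1) • ‖x‖⁻¹ • x := by
        rw [sub_smul, smul_inv_smul₀ hx0, one_smul]
      rw [this, norm_smul, hnormalize x hx, Real.norm_eq_abs, abs_of_pos (by linarith)]
      linarith
    calc _ ≤ L * ‖x - ‖x‖⁻¹ • x‖ := by
          rw [← dist_eq_norm x, ← dist_eq_norm]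
          exact hg.dist_le_mul x (‖x‖⁻¹ • x)
      _ ≤ L * ε := by gcongr
  have hrest : |∫ x in A, lineDeriv ℝ g x e * radialCutoff ε x| ≤ L * ‖e‖ * volume.real A :=
    norm_setIntegral_le_of_norm_le_const hAfin fun x _ ↦ hbound x
  have hparts := integral_lineDeriv_mul_radialCutoff hε hg e
  rw [hsplit] at hparts
  calc _ = |ε⁻¹ * ((∫ x in A, ⟪‖x‖⁻¹ • x, e⟫ * g x) -
        ∫ x in A, ⟪‖x‖⁻¹ • x, e⟫ * g (‖x‖⁻¹ • x)) -
          ∫ x in A, lineDeriv ℝ g x e * radialCutoff ε x| := by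
        rw [mul_sub, ← hparts]
        ring_nf
    _ ≤ ε⁻¹ * (‖e‖ * (L * ε) * volume.real A) + L * ‖e‖ * volume.real A := by
        refine (abs_sub _ _).trans (add_le_add ?_ hrest)
        rw [abs_mul, abs_of_pos (inv_pos.2 hε)]
        gcongr
    _ = _ := by
        field_simp
        ring

lemma volume_real_closedBall_diff {ε : ℝ} (hε : 0 ≤ ε) :
    volume.real (closedBall (0 : E) (1 + ε) \ closedBall 0 1) =
      ((1 + ε) ^ Module.finrank ℝ E - 1) * volume.real (closedBall (0 : E) 1) := by
  rw [measureReal_sdiff (closedBall_subset_closedBall (by linarith))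
    isClosed_closedBall.measurableSet (isCompact_closedBall _ _).measure_ne_top,
    Measure.addHaar_real_closedBall' volume _ (by linarith), sub_mul, one_mul]

end Divergence

/-- The divergence theorem on the unit ball for a Lipschitz function times a constant field. -/
theorem setIntegral_closedBall_lineDeriv {d : ℕ} (hd : 1 ≤ d) {L : ℝ≥0}
    {g : EuclideanSpace ℝ (Fin d) → ℝ} (hg : LipschitzWith L g)
    (e : EuclideanSpace ℝ (Fin d)) :
    ∫ x in closedBall 0 1, lineDeriv ℝ g x e =
      d * volume.real (closedBall (0 : EuclideanSpace ℝ (Fin d)) 1) *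
        ∫ u, ⟪u, e⟫ * g u ∂uniformUnitSphere d := by
  set V := volume.real (closedBall (0 : EuclideanSpace ℝ (Fin d)) 1)
  set I := ∫ u, ⟪u, e⟫ * g u ∂uniformUnitSphere d
  have hVpos : 0 < V := ENNReal.toReal_pos (measure_closedBall_pos _ _ one_pos).ne'
    (isCompact_closedBall _ _).measure_ne_top
  have hvol {ε : ℝ} (hε : 0 ≤ ε) : volume.real
      (closedBall (0 : EuclideanSpace ℝ (Fin d)) (1 + ε) \ closedBall 0 1) =
        ((1 + ε) ^ d - 1) * V := by
    rw [volume_real_closedBall_diff hε, finrank_euclideanSpace_fin]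
  have hest {ε : ℝ} (hε : 0 < ε) :
      |(∫ x in closedBall (0 : EuclideanSpace ℝ (Fin d)) 1, lineDeriv ℝ g x e) -
        ε⁻¹ * ((1 + ε) ^ d - 1) * (V * I)| ≤ 2 * L * ‖e‖ * (((1 + ε) ^ d - 1) * V) := by
    have h := abs_setIntegral_lineDeriv_sub_le hε hg e
    have hpos : 0 < volume.real
        (closedBall (0 : EuclideanSpace ℝ (Fin d)) (1 + ε) \ closedBall 0 1) := by
      rw [hvol hε.le]
      exact mul_pos (sub_pos.2 (one_lt_pow₀ (by linarith) (by omega))) hVpos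
    obtain ⟨h0, htop⟩ := ENNReal.toReal_ne_zero.1 hpos.ne'
    rw [setIntegral_inv_norm_smul hd
      (isClosed_closedBall.measurableSet.diff isClosed_closedBall.measurableSet) (by simp)
      (fun φ ↦ by ext x; simp) h0 htop (H := fun u ↦ ⟪u, e⟫ * g u)
      (by have := hg.continuous; fun_prop), hvol hε.le] at h
    convert h using 3
    ring
  have hpow : Tendsto (fun ε : ℝ ↦ (1 + ε) ^ d - 1) (𝓝[>] 0) (𝓝 0) := by
    have : Continuous fun ε : ℝ ↦ (1 + ε) ^ d - 1 := by fun_prop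
    simpa using (this.tendsto 0).mono_left nhdsWithin_le_nhds
  have hslope : Tendsto (fun ε : ℝ ↦ ε⁻¹ * ((1 + ε) ^ d - 1)) (𝓝[>] 0) (𝓝 d) := by
    have h : HasDerivAt (fun r : ℝ ↦ r ^ d) d 1 := by simpa using hasDerivAt_pow d (1 : ℝ)
    simpa using h.tendsto_slope_zero_right
  have hlim : Tendsto (fun ε : ℝ ↦
      |(∫ x in closedBall (0 : EuclideanSpace ℝ (Fin d)) 1, lineDeriv ℝ g x e) -
        ε⁻¹ * ((1 + ε) ^ d - 1) * (V * I)|) (𝓝[>] 0) (𝓝 0) := by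
    refine squeeze_zero' (.of_forall fun _ ↦ abs_nonneg _)
      (eventually_mem_nhdsWithin.mono fun ε hε ↦ hest hε) ?_
    simpa using (hpow.mul_const V).const_mul (2 * L * ‖e‖)
  have := tendsto_nhds_unique hlim ((tendsto_const_nhds.sub (hslope.mul_const (V * I))).abs)
  rw [mul_assoc]
  exact sub_eq_zero.1 (abs_eq_zero.1 this.symm)

/-- Sphere-sampling gradient identity for ball smoothing (Flaxman et al.).
If `f : ℝ^d → ℝ` is Lipschitz and `δ > 0`, then the ball-smoothed function
`f̂ x = E_{v ∼ Unif(𝔹^d)}[f (x + δ v)]` is differentiable with gradient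
`∇ f̂ x = (d/δ) • E_{u ∼ Unif(S^{d−1})}[f (x + δ u) • u]`. -/
theorem ball_smoothing_gradient {d : ℕ} (hd : 1 ≤ d)
    (f : EuclideanSpace ℝ (Fin d) → ℝ)
    (hf : ∃ L : ℝ, ∀ x y, |f x - f y| ≤ L * ‖x - y‖)
    (δ : ℝ) (hδ : 0 < δ) (x : EuclideanSpace ℝ (Fin d)) :
    HasGradientAt (fun y => ∫ v, f (y + δ • v) ∂(uniformUnitBall d))
      (((d : ℝ) / δ) • ∫ u, f (x + δ • u) • u ∂(uniformUnitSphere d)) x := by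
  obtain ⟨L', hL'⟩ := hf
  obtain ⟨L, hL⟩ : ∃ L : ℝ≥0, LipschitzWith L f := by
    refine ⟨Real.toNNReal L', LipschitzWith.of_dist_le_mul fun y z ↦ ?_⟩
    rw [Real.dist_eq, dist_eq_norm]
    exact (hL' y z).trans (by gcongr; exact Real.le_coe_toNNReal L')
  set g : EuclideanSpace ℝ (Fin d) → ℝ := fun v ↦ f (x + δ • v) with hg_def
  have hg : LipschitzWith (L * ‖δ‖₊) g := by
    refine hL.comp (LipschitzWith.of_dist_le_mul fun v w ↦ ?_)
    rw [dist_add_left, dist_smul₀, coe_nnnorm]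
  have hball0 : volume (closedBall (0 : EuclideanSpace ℝ (Fin d)) 1) ≠ 0 :=
    (measure_closedBall_pos _ _ one_pos).ne'
  have hballtop : volume (closedBall (0 : EuclideanSpace ℝ (Fin d)) 1) ≠ ∞ :=
    (isCompact_closedBall _ _).measure_ne_top
  have : IsProbabilityMeasure (uniformUnitBall d) :=
    ProbabilityTheory.cond_isProbabilityMeasure_of_finite hball0 hballtop
  have : IsProbabilityMeasure (uniformUnitSphere d) := isProbabilityMeasure_uniformUnitSphere hd
  have hball_ae {p : EuclideanSpace ℝ (Fin d) → Prop} (h : ∀ᵐ v, p v) :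
      ∀ᵐ v ∂uniformUnitBall d, p v :=
    Measure.ae_smul_measure (ae_restrict_of_ae h) _
  have hgrowth (v : EuclideanSpace ℝ (Fin d)) (hv : ‖v‖ ≤ 1) : ‖g v‖ ≤ |g 0| + L * ‖δ‖ := by
    have h1 : |g v - g 0| ≤ L * ‖δ‖ * ‖v‖ := by simpa [Real.dist_eq] using hg.dist_le_mul v 0
    have h2 : L * ‖δ‖ * ‖v‖ ≤ L * ‖δ‖ := mul_le_of_le_one_right (by positivity) hv
    rw [Real.norm_eq_abs]
    linarith [abs_sub_abs_le_abs_sub (g v) (g 0)]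
  have hdiff := hg.ae_differentiableAt (μ := volume)
  obtain ⟨hint, hderiv⟩ := hasFDerivAt_integral_of_dominated_loc_of_lip
    (μ := uniformUnitBall d) (F := fun y v ↦ f (y + δ • v)) (x₀ := x) (s := univ)
    (F' := fun v ↦ δ⁻¹ • fderiv ℝ g v) (bound := fun _ ↦ (L : ℝ)) univ_mem
    (.of_forall fun y ↦ (hL.continuous.comp (by fun_prop)).aestronglyMeasurable)
    (Integrable.of_bound hg.continuous.aestronglyMeasurable (|g 0| + L * ‖δ‖)
      (Measure.ae_smul_measure ((ae_restrict_mem isClosed_closedBall.measurableSet).mono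
        fun v hv ↦ hgrowth v (by simpa using hv)) _))
    ((measurable_fderiv ℝ g).const_smul δ⁻¹).aestronglyMeasurable
    (.of_forall fun v ↦ by
      refine LipschitzOnWith.of_dist_le_mul fun y _ z _ ↦ ?_
      simpa using hL.dist_le_mul (y + δ • v) (z + δ • v))
    (integrable_const _)
    ((hball_ae hdiff).mono fun v hv ↦ by
      have hinner : HasFDerivAt (fun y : EuclideanSpace ℝ (Fin d) ↦ v + δ⁻¹ • (y - x))
          (δ⁻¹ • ContinuousLinearMap.id ℝ _) x :=
        (((hasFDerivAt_id x).sub_const x).const_smul δ⁻¹).const_add v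
      have hgv : HasFDerivAt g (fderiv ℝ g v) (v + δ⁻¹ • (x - x)) := by
        simpa using hv.hasFDerivAt
      convert hgv.comp x hinner using 1
      · ext y
        simp only [hg_def, Function.comp_apply, smul_add, smul_inv_smul₀ hδ.ne']
        congr 1
        abel
      · simp)
  rw [hasGradientAt_iff_hasFDerivAt]
  refine hderiv.congr_fderiv (ContinuousLinearMap.ext fun e ↦ ?_)
  have hsphere : Integrable (fun u ↦ g u • u) (uniformUnitSphere d) := by
    refine Integrable.of_bound (hg.continuous.smul continuous_id).aestronglyMeasurable
      (|g 0| + L * ‖δ‖) (ae_norm_eq_one_uniformUnitSphere.mono fun u hu ↦ ?_)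
    rw [norm_smul, hu, mul_one]
    exact hgrowth u hu.le
  have hline : ∫ v, fderiv ℝ g v e ∂uniformUnitBall d =
      d * ∫ u, ⟪u, e⟫ * g u ∂uniformUnitSphere d := by
    rw [integral_congr_ae ((hball_ae hdiff).mono fun v hv ↦ (hv.lineDeriv_eq_fderiv).symm),
      uniformUnitBall, integral_smul_measure, setIntegral_closedBall_lineDeriv hd hg e,
      ENNReal.toReal_inv, ← measureReal_def, smul_eq_mul, mul_comm (d : ℝ), mul_assoc,
      inv_mul_cancel_left₀]
    exact ENNReal.toReal_ne_zero.2 ⟨hball0, hballtop⟩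
  rw [ContinuousLinearMap.integral_apply hint]
  simp only [smul_apply, smul_eq_mul, integral_const_mul, hline,
    InnerProductSpace.toDual_apply_apply, inner_smul_left]
  rw [real_inner_comm, ← integral_inner hsphere]
  simp only [inner_smul_right, real_inner_comm, mul_comm (g _)]
  simp
  ring
end
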